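/- arXiv:1802.09301 — 2 statements merged into one kernel-verified Lean document; each statement's English description precedes it below -/
import Mathlib

section
/- There exist universal constants c₁, c₂ > 0 such that the following holds for every dimension d: if f(x, y) is a log-concave joint probability density on ℝ^d × ℝ^d of a random pair (X, Y), f(x) := ∫ f(x, y) dy is the first marginal density, and f(y|x) := f(x, y)/f(x) is the conditional density, then P( | −log f(Y|X) − E[−log f(Y|X)] | > t ) ≤ 2 c₁ exp( −(c₂/2) min(t, t²/d) ) for all t ≥ 0, where E[−log f(Y|X)] = h(Y|X) is the conditional differential entropy. -/
open MeasureTheory Real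

namespace CIC

open scoped ENNReal

lemma bm_compact {K L C : Set ℝ} (hK : IsCompact K) (hL : IsCompact L) (hKn : K.Nonempty)
    (hLn : L.Nonempty) (h : ∀ x ∈ K, ∀ y ∈ L, x + y ∈ C) :
    volume K + volume L ≤ volume C := by
  obtain ⟨k, hk⟩ := hK.exists_isGreatest hKn
  obtain ⟨l, hl⟩ := hL.exists_isLeast hLn
  have e1 : volume ((fun x => x + -l) ⁻¹' K) = volume K := measure_preimage_add_right _ _ _
  have e2 : volume ((fun x => x + -k) ⁻¹' L) = volume L := measure_preimage_add_right _ _ _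
  have hm : MeasurableSet ((fun x => x + -k) ⁻¹' L) :=
    (measurable_add_const _) hL.measurableSet
  rw [← e1, ← e2, ← measure_union₀ hm.nullMeasurableSet]
  · apply measure_mono
    rintro x (hx | hx)
    · simpa using h _ hx _ hl.1
    · simpa using h _ hk.1 _ hx
  · refine measure_mono_null (t := {k + l}) ?_ (by simp)
    rintro x ⟨h1, h2⟩
    have := hk.2 h1
    have := hl.2 h2
    simp only [Set.mem_singleton_iff]
    linarith

lemma bm {A B C : Set ℝ} (hA : MeasurableSet A) (hB : MeasurableSet B) (hAn : A.Nonempty)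
    (hBn : B.Nonempty) (h : ∀ x ∈ A, ∀ y ∈ B, x + y ∈ C) :
    volume A + volume B ≤ volume C := by
  obtain ⟨a, ha⟩ := hAn
  obtain ⟨b, hb⟩ := hBn
  have key : ∀ K ⊆ A, IsCompact K → ∀ L ⊆ B, IsCompact L → volume K + volume L ≤ volume C := by
    intro K hKA hK L hLB hL
    calc volume K + volume L ≤ volume (insert a K) + volume (insert b L) := by
          gcongr <;> exact Set.subset_insert _ _
      _ ≤ volume C := by
          apply bm_compact (hK.insert a) (hL.insert b) (Set.insert_nonempty _ _)
            (Set.insert_nonempty _ _)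
          intro x hx y hy
          exact h x (Set.insert_subset ha hKA hx) y (Set.insert_subset hb hLB hy)
  have eA : volume A = ⨆ K, ⨆ _ : K ⊆ A ∧ IsCompact K, volume K := by
    rw [hA.measure_eq_iSup_isCompact]; simp only [iSup_and]
  have eB : volume B = ⨆ K, ⨆ _ : K ⊆ B ∧ IsCompact K, volume K := by
    rw [hB.measure_eq_iSup_isCompact]; simp only [iSup_and]
  rw [eA, eB]
  exact ENNReal.biSup_add_biSup_le' ⟨∅, Set.empty_subset _, isCompact_empty⟩
    ⟨∅, Set.empty_subset _, isCompact_empty⟩ fun K hK L hL => key K hK.1 hK.2 L hL.1 hL.2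

lemma amgm {x y : ℝ≥0∞} {a b : ℝ} (ha : 0 < a) (hb : 0 < b) (hab : a + b = 1) :
    x ^ a * y ^ b ≤ ENNReal.ofReal a * x + ENNReal.ofReal b * y := by
  have hpq : Real.HolderConjugate a⁻¹ b⁻¹ := by
    refine ⟨by simpa using hab, by positivity, by positivity⟩
  have := ENNReal.young_inequality (x ^ a) (y ^ b) hpq
  rw [← ENNReal.rpow_mul, ← ENNReal.rpow_mul, mul_inv_cancel₀ ha.ne', mul_inv_cancel₀ hb.ne',
    ENNReal.rpow_one, ENNReal.rpow_one, ENNReal.ofReal_inv_of_pos ha, ENNReal.ofReal_inv_of_pos hb,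
    div_eq_mul_inv, div_eq_mul_inv, inv_inv, inv_inv] at this
  rwa [mul_comm _ x, mul_comm _ y]

/-- Layer-cake for functions bounded by one. -/
lemma layer {f : ℝ → ℝ≥0∞} (hf : Measurable f) (h1 : ∀ x, f x ≤ 1) :
    ∫⁻ x, f x = ∫⁻ t in Set.Ioo (0:ℝ) 1, volume {x | ENNReal.ofReal t < f x} := by
  have e : ∀ x, f x = ENNReal.ofReal (f x).toReal := fun x =>
    (ENNReal.ofReal_toReal (ne_top_of_le_ne_top ENNReal.one_ne_top (h1 x))).symm
  have e2 : ∫⁻ x, f x = ∫⁻ x, ENNReal.ofReal (f x).toReal := lintegral_congr e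
  rw [e2, lintegral_eq_lintegral_meas_lt volume (ae_of_all _ fun x => ENNReal.toReal_nonneg)
    hf.ennreal_toReal.aemeasurable]
  have : ∀ t ∈ Set.Ioi (0:ℝ), volume {x | t < (f x).toReal}
      = (Set.Ioo (0:ℝ) 1).indicator (fun t => volume {x | ENNReal.ofReal t < f x}) t := by
    intro t ht
    have ht : 0 < t := ht
    by_cases h : t < 1
    · rw [Set.indicator_of_mem (Set.mem_Ioo.2 ⟨ht, h⟩)]
      congr 1
      ext x
      simp only [Set.mem_ofPred_eq]
      rw [ENNReal.ofReal_lt_iff_lt_toReal ht.le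
        (ne_top_of_le_ne_top ENNReal.one_ne_top (h1 x))]
    · rw [Set.indicator_of_notMem (by simp; intro _; linarith)]
      convert measure_empty (μ := (volume : Measure ℝ))
      ext x
      simp only [Set.mem_ofPred_eq, Set.mem_empty_iff_false, iff_false, not_lt]
      have := ENNReal.toReal_mono ENNReal.one_ne_top (h1 x)
      simp at this
      linarith
  rw [setLIntegral_congr_fun measurableSet_Ioi this, lintegral_indicator measurableSet_Ioo,
    Measure.restrict_restrict measurableSet_Ioo]
  congr 2
  ext x; simp; tauto

/-- Case `sup f = sup g = 1`. -/
lemma pl_one {f g h : ℝ → ℝ≥0∞} (hf : Measurable f) (hg : Measurable g) (hh : Measurable h)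
    {a b : ℝ} (ha : 0 < a) (hb : 0 < b) (hab : a + b = 1)
    (hsf : ⨆ x, f x = 1) (hsg : ⨆ x, g x = 1)
    (H : ∀ x y, f x ^ a * g y ^ b ≤ h (a * x + b * y)) :
    (∫⁻ x, f x) ^ a * (∫⁻ x, g x) ^ b ≤ ∫⁻ x, h x := by
  have hf1 : ∀ x, f x ≤ 1 := fun x => hsf ▸ le_iSup f x
  have hg1 : ∀ x, g x ≤ 1 := fun x => hsg ▸ le_iSup g x
  refine (amgm ha hb hab).trans ?_
  calc _ ≤ ∫⁻ x, min (h x) 1 := ?_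
    _ ≤ _ := lintegral_mono fun x => min_le_left _ _
  rw [layer hf hf1, layer hg hg1, layer (hh.min measurable_const) (fun x => min_le_right _ _)]
  rw [← lintegral_const_mul' _ _ ENNReal.ofReal_ne_top,
    ← lintegral_const_mul' _ _ ENNReal.ofReal_ne_top]
  refine (le_lintegral_add _ _).trans ?_
  refine setLIntegral_mono' measurableSet_Ioo ?_
  rintro t ⟨ht0, ht1⟩
  have ht1' : ENNReal.ofReal t < 1 := by simpa using ht1
  have key : ∀ (c : ℝ) (_ : 0 < c) (F : ℝ → ℝ≥0∞), 
      ENNReal.ofReal c * volume {x | ENNReal.ofReal t < F x}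
      = volume ((fun x => c⁻¹ * x) ⁻¹' {x | ENNReal.ofReal t < F x}) := by
    intro c hc F
    rw [Real.volume_preimage_mul_left (by positivity), inv_inv, abs_of_pos hc]
  rw [key a ha, key b hb]
  apply bm
  · exact (measurable_const_mul _) (measurableSet_lt measurable_const hf)
  · exact (measurable_const_mul _) (measurableSet_lt measurable_const hg)
  · rw [← hsf, lt_iSup_iff] at ht1'
    obtain ⟨x, hx⟩ := ht1'
    exact ⟨a * x, by simpa [ha.ne'] using hx⟩
  · rw [← hsg, lt_iSup_iff] at ht1'
    obtain ⟨x, hx⟩ := ht1'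
    exact ⟨b * x, by simpa [hb.ne'] using hx⟩
  · intro x hx y hy
    simp only [Set.mem_preimage, Set.mem_ofPred_eq] at hx hy ⊢
    refine lt_min ?_ ht1'
    have := H (a⁻¹ * x) (b⁻¹ * y)
    rw [mul_inv_cancel_left₀ ha.ne', mul_inv_cancel_left₀ hb.ne'] at this
    refine lt_of_lt_of_le ?_ this
    calc ENNReal.ofReal t = ENNReal.ofReal t ^ a * ENNReal.ofReal t ^ b := by
          rw [← ENNReal.rpow_add_of_nonneg _ _ ha.le hb.le, hab, ENNReal.rpow_one]
      _ < _ := ENNReal.mul_lt_mul (ENNReal.rpow_lt_rpow hx ha) (ENNReal.rpow_lt_rpow hy hb)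

/-- Bounded case. -/
lemma pl_bdd {f g h : ℝ → ℝ≥0∞} (hf : Measurable f) (hg : Measurable g) (hh : Measurable h)
    {a b : ℝ} (ha : 0 < a) (hb : 0 < b) (hab : a + b = 1)
    (hsf : ⨆ x, f x ≠ ∞) (hsg : ⨆ x, g x ≠ ∞)
    (H : ∀ x y, f x ^ a * g y ^ b ≤ h (a * x + b * y)) :
    (∫⁻ x, f x) ^ a * (∫⁻ x, g x) ^ b ≤ ∫⁻ x, h x := by
  set M := ⨆ x, f x with hM
  set N := ⨆ x, g x with hN
  by_cases hM0 : M = 0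
  · have : ∀ x, f x = 0 := by simpa [hM] using hM0
    simp [this, ha]
  by_cases hN0 : N = 0
  · have : ∀ x, g x = 0 := by simpa [hN] using hN0
    simp [this, hb]
  have hc0 : M ^ a * N ^ b ≠ 0 := by simp [hM0, hN0, hsf, hsg]
  have hct : M ^ a * N ^ b ≠ ∞ :=
    ENNReal.mul_ne_top (ENNReal.rpow_ne_top_of_nonneg ha.le hsf)
      (ENNReal.rpow_ne_top_of_nonneg hb.le hsg)
  have hinv : (M ^ a * N ^ b)⁻¹ = (M⁻¹) ^ a * (N⁻¹) ^ b := by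
    rw [ENNReal.mul_inv (by simp [hM0, hsf]) (by simp [hN0, hsg]), ENNReal.inv_rpow,
      ENNReal.inv_rpow]
  have := pl_one (f := fun x => M⁻¹ * f x) (g := fun x => N⁻¹ * g x)
    (h := fun x => (M ^ a * N ^ b)⁻¹ * h x) (hf.const_mul _) (hg.const_mul _) (hh.const_mul _)
    ha hb hab (by rw [← ENNReal.mul_iSup, ENNReal.inv_mul_cancel hM0 hsf])
    (by rw [← ENNReal.mul_iSup, ENNReal.inv_mul_cancel hN0 hsg])
    (by
      intro x y
      rw [ENNReal.mul_rpow_of_nonneg _ _ ha.le, ENNReal.mul_rpow_of_nonneg _ _ hb.le, hinv,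
        mul_mul_mul_comm]
      gcongr
      exact H x y)
  rw [lintegral_const_mul _ hf, lintegral_const_mul _ hg, lintegral_const_mul _ hh,
    ENNReal.mul_rpow_of_nonneg _ _ ha.le, ENNReal.mul_rpow_of_nonneg _ _ hb.le,
    mul_mul_mul_comm, ← hinv] at this
  rwa [ENNReal.mul_le_mul_iff_right (by simpa using hct) (by simpa using hc0)] at this

lemma trunc {f : ℝ → ℝ≥0∞} (hf : Measurable f) :
    ∫⁻ x, f x = ⨆ n : ℕ, ∫⁻ x, min (f x) n := by
  rw [← lintegral_iSup (fun n => hf.min measurable_const)]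
  · refine lintegral_congr fun x => ?_
    rw [← inf_iSup_eq]
    simp [ENNReal.iSup_natCast]
  · intro m n hmn x
    exact min_le_min_left _ (by exact_mod_cast hmn)

lemma iSup_rpow' {u : ℕ → ℝ≥0∞} {a : ℝ} (ha : 0 < a) : (⨆ n, u n) ^ a = ⨆ n, u n ^ a :=
  (ENNReal.orderIsoRpow a ha).map_iSup u

/-- The Prékopa–Leindler property of a measurable real vector space. -/
def PL (E : Type) [AddCommGroup E] [Module ℝ E] [MeasureSpace E] : Prop :=
  ∀ (f g h : E → ℝ≥0∞), Measurable f → Measurable g → Measurable h →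
    ∀ a b : ℝ, 0 < a → 0 < b → a + b = 1 →
    (∀ x y, f x ^ a * g y ^ b ≤ h (a • x + b • y)) →
    (∫⁻ x, f x) ^ a * (∫⁻ x, g x) ^ b ≤ ∫⁻ x, h x

lemma pl_real : PL ℝ := by
  intro f g h hf hg hh a b ha hb hab H
  rw [trunc hf, trunc hg, iSup_rpow' ha, iSup_rpow' hb, ENNReal.iSup_mul]
  refine iSup_le fun n => ?_
  rw [ENNReal.mul_iSup]
  refine iSup_le fun m => ?_
  refine pl_bdd (hf.min measurable_const) (hg.min measurable_const) hh ha hb hab ?_ ?_ ?_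
  · exact ne_top_of_le_ne_top (ENNReal.natCast_ne_top n) (iSup_le fun x => min_le_right _ _)
  · exact ne_top_of_le_ne_top (ENNReal.natCast_ne_top m) (iSup_le fun x => min_le_right _ _)
  · intro x y
    refine le_trans ?_ (H x y)
    gcongr <;> exact min_le_left _ _

lemma pl_prod {E F : Type} [AddCommGroup E] [Module ℝ E] [MeasureSpace E]
    [AddCommGroup F] [Module ℝ F] [MeasureSpace F] [SFinite (volume : Measure E)]
    [SFinite (volume : Measure F)] (hE : PL E) (hF : PL F) : PL (E × F) := by
  intro f g h hf hg hh a b ha hb hab H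
  rw [Measure.volume_eq_prod, lintegral_prod _ hf.aemeasurable, lintegral_prod _ hg.aemeasurable,
    lintegral_prod _ hh.aemeasurable]
  refine hE _ _ _ hf.lintegral_prod_right' hg.lintegral_prod_right' hh.lintegral_prod_right'
    a b ha hb hab fun x y => ?_
  refine hF _ _ _ (by fun_prop) (by fun_prop) (by fun_prop) a b ha hb hab fun u v => ?_
  exact H (x, u) (y, v)

lemma pl_equiv {E F : Type} [AddCommGroup E] [Module ℝ E] [MeasureSpace E]
    [AddCommGroup F] [Module ℝ F] [MeasureSpace F] (e : E ≃ᵐ F)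
    (he : MeasurePreserving e) (hl : ∀ (a b : ℝ) x y, e (a • x + b • y) = a • e x + b • e y)
    (hE : PL E) : PL F := by
  intro f g h hf hg hh a b ha hb hab H
  rw [← he.lintegral_comp hf, ← he.lintegral_comp hg, ← he.lintegral_comp hh]
  refine hE _ _ _ (hf.comp e.measurable) (hg.comp e.measurable) (hh.comp e.measurable)
    a b ha hb hab fun x y => ?_
  simp only [Function.comp, hl]
  exact H _ _

lemma pl_pi : ∀ n : ℕ, PL (Fin n → ℝ)
  | 0 => by
    intro f g h hf hg hh a b ha hb hab H
    have hv : (volume : Measure (Fin 0 → ℝ)) = Measure.dirac 0 := by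
      rw [volume_pi, Measure.pi_of_empty _ 0]
    rw [hv, lintegral_dirac, lintegral_dirac, lintegral_dirac]
    simpa using H 0 0
  | n + 1 => by
    refine pl_equiv (MeasurableEquiv.piFinSuccAbove (fun _ => ℝ) (0 : Fin (n + 1))).symm
      (volume_preserving_piFinSuccAbove (fun _ => ℝ) 0).symm ?_ (pl_prod pl_real (pl_pi n))
    intro a b x y
    ext i
    refine Fin.cases ?_ (fun j => ?_) i <;> simp [MeasurableEquiv.piFinSuccAbove]

lemma pl_euclidean (d : ℕ) : PL (EuclideanSpace ℝ (Fin d)) := by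
  refine pl_equiv (MeasurableEquiv.toLp 2 (Fin d → ℝ)) (PiLp.volume_preserving_toLp (Fin d)) ?_
    (pl_pi d)
  intro a b x y
  ext i
  simp

section FMW

set_option linter.unusedSectionVars false

variable {E : Type} [NormedAddCommGroup E] [NormedSpace ℝ E] [MeasureSpace E] [BorelSpace E]
  [FiniteDimensional ℝ E] [(volume : Measure E).IsAddHaarMeasure]

/-- The partition function. -/
noncomputable def Z (V : E → ℝ) (s : ℝ) : ℝ≥0∞ := ∫⁻ x, ENNReal.ofReal (Real.exp (-(s * V x)))

/-- The rescaled partition function, an integral of the perspective of `V`. -/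
noncomputable def G (V : E → ℝ) (s : ℝ) : ℝ≥0∞ :=
  ∫⁻ x, ENNReal.ofReal (Real.exp (-(s * V (s⁻¹ • x))))

lemma G_logconcave (hE : PL E) {V : E → ℝ} (hV : ConvexOn ℝ Set.univ V) (hm : Measurable V)
    {s t a b : ℝ} (hs : 0 < s) (ht : 0 < t) (ha : 0 < a) (hb : 0 < b) (hab : a + b = 1) :
    G V s ^ a * G V t ^ b ≤ G V (a * s + b * t) := by
  refine hE _ _ _ (by fun_prop) (by fun_prop) (by fun_prop) a b ha hb hab fun x y => ?_
  have hr : 0 < a * s + b * t := by positivity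
  rw [ENNReal.ofReal_rpow_of_pos (Real.exp_pos _), ENNReal.ofReal_rpow_of_pos (Real.exp_pos _),
    ← ENNReal.ofReal_mul (by positivity), ← Real.exp_mul, ← Real.exp_mul, ← Real.exp_add]
  apply ENNReal.ofReal_le_ofReal
  apply Real.exp_le_exp.2
  have h := hV.2 (Set.mem_univ (s⁻¹ • x)) (Set.mem_univ (t⁻¹ • y))
    (show 0 ≤ a * s / (a * s + b * t) by positivity)
    (show 0 ≤ b * t / (a * s + b * t) by positivity) (by field_simp)
  have e : (a * s / (a * s + b * t)) • s⁻¹ • x + (b * t / (a * s + b * t)) • t⁻¹ • y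
      = (a * s + b * t)⁻¹ • (a • x + b • y) := by
    simp only [smul_smul, smul_add]
    congr 2 <;> field_simp
  rw [e, smul_eq_mul, smul_eq_mul] at h
  have h2 := mul_le_mul_of_nonneg_left h hr.le
  have e2 : (a * s + b * t) * (a * s / (a * s + b * t) * V (s⁻¹ • x)
      + b * t / (a * s + b * t) * V (t⁻¹ • y)) = a * s * V (s⁻¹ • x) + b * t * V (t⁻¹ • y) := by
    field_simp
  rw [e2] at h2
  linarith

lemma G_eq {V : E → ℝ} (hm : Measurable V) {s : ℝ} (hs : 0 < s) :
    G V s = ENNReal.ofReal (s ^ Module.finrank ℝ E) * Z V s := by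
  have h := Measure.map_addHaar_smul (volume : Measure E) (inv_ne_zero hs.ne')
  have h2 : ∫⁻ y, ENNReal.ofReal (Real.exp (-(s * V y))) ∂(Measure.map (s⁻¹ • ·) (volume : Measure E))
      = G V s := by
    rw [lintegral_map (by fun_prop) (by fun_prop)]
    rfl
  rw [← h2, h, lintegral_smul_measure, inv_pow, inv_inv, abs_of_pos (by positivity)]
  rfl

lemma Z_pos {V : E → ℝ} (hm : Measurable V) (s : ℝ) : Z V s ≠ 0 := by
  intro h
  rw [Z, lintegral_eq_zero_iff (by fun_prop)] at h
  have : ∀ᵐ x : E, False := by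
    filter_upwards [h] with x hx
    simp at hx
    exact absurd hx (not_le.2 (Real.exp_pos _))
  simp only [Filter.eventually_false_iff_eq_bot, ae_eq_bot] at this
  exact NeZero.ne (volume : Measure E) this

lemma G_pos {V : E → ℝ} (hm : Measurable V) {s : ℝ} (hs : 0 < s) : G V s ≠ 0 := by
  rw [G_eq hm hs]
  exact mul_ne_zero (by simp; positivity) (Z_pos hm s)

lemma G_ne_top (hE : PL E) {V : E → ℝ} (hV : ConvexOn ℝ Set.univ V) (hm : Measurable V)
    (h1 : G V 1 ≠ ∞) {s : ℝ} (hs : 0 < s) : G V s ≠ ∞ := by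
  intro htop
  -- choose `t` on the other side of one
  obtain ⟨t, a, b, ht, ha, hb, hab, he⟩ : ∃ t a b : ℝ, 0 < t ∧ 0 < a ∧ 0 < b ∧ a + b = 1 ∧
      a * s + b * t = 1 := by
    refine ⟨s⁻¹, 1 / (1 + s), s / (1 + s), by positivity, by positivity, by positivity, ?_, ?_⟩
    · field_simp
    · field_simp
      ring
  have := G_logconcave hE hV hm hs ht ha hb hab
  rw [he, htop, ENNReal.top_rpow_of_pos ha, ENNReal.top_mul] at this
  · exact h1 (top_le_iff.1 this)
  · intro h0
    rw [ENNReal.rpow_eq_zero_iff] at h0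
    rcases h0 with h0 | h0
    · exact G_pos hm ht h0.1
    · linarith [h0.2]

lemma Z_ne_top (hE : PL E) {V : E → ℝ} (hV : ConvexOn ℝ Set.univ V) (hm : Measurable V)
    (h1 : Z V 1 = 1) {s : ℝ} (hs : 0 < s) : Z V s ≠ ∞ := by
  have hG1 : G V 1 ≠ ∞ := by rw [G_eq hm one_pos, h1]; simp
  have := G_ne_top hE hV hm hG1 hs
  rw [G_eq hm hs] at this
  intro h
  rw [h, ENNReal.mul_top (by simp; positivity)] at this
  exact this rfl

lemma lint_exp {V : E → ℝ} (hm : Measurable V) (β : ℝ) :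
    ∫⁻ x, ENNReal.ofReal (Real.exp (β * V x))
      ∂(volume.withDensity fun p => ENNReal.ofReal (Real.exp (-V p))) = Z V (1 - β) := by
  rw [lintegral_withDensity_eq_lintegral_mul _ (by fun_prop) (by fun_prop)]
  refine lintegral_congr fun x => ?_
  rw [Pi.mul_apply, ← ENNReal.ofReal_mul (Real.exp_pos _).le, ← Real.exp_add]
  congr 2; ring

/-- The measure with density `e^{-V}`. -/
noncomputable def dm (V : E → ℝ) : Measure E :=
  volume.withDensity fun p => ENNReal.ofReal (Real.exp (-V p))

lemma dm_prob {V : E → ℝ} (h1 : Z V 1 = 1) : IsProbabilityMeasure (dm V) := by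
  constructor
  rw [dm, withDensity_apply _ MeasurableSet.univ, Measure.restrict_univ]
  simpa [Z] using h1

lemma int_exp (hE : PL E) {V : E → ℝ} (hV : ConvexOn ℝ Set.univ V) (hm : Measurable V)
    (h1 : Z V 1 = 1) {β : ℝ} (hβ : β < 1) :
    Integrable (fun x => Real.exp (β * V x)) (dm V) := by
  refine ⟨by fun_prop, ?_⟩
  rw [hasFiniteIntegral_iff_ofReal (ae_of_all _ fun x => (Real.exp_pos _).le), dm, lint_exp hm]
  exact (Z_ne_top hE hV hm h1 (by linarith)).lt_top

lemma mgf_eq {V : E → ℝ} (hm : Measurable V) (β : ℝ) :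
    ProbabilityTheory.mgf V (dm V) β = (Z V (1 - β)).toReal := by
  rw [ProbabilityTheory.mgf, integral_eq_lintegral_of_nonneg_ae
    (ae_of_all _ fun x => (Real.exp_pos _).le) (by fun_prop), dm, lint_exp hm]

lemma zero_mem (hE : PL E) {V : E → ℝ} (hV : ConvexOn ℝ Set.univ V) (hm : Measurable V)
    (h1 : Z V 1 = 1) : 0 ∈ interior (ProbabilityTheory.integrableExpSet V (dm V)) := by
  refine mem_interior.2 ⟨Set.Iio 1, fun β hβ => int_exp hE hV hm h1 hβ, isOpen_Iio, by simp⟩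

lemma int_V (hE : PL E) {V : E → ℝ} (hV : ConvexOn ℝ Set.univ V) (hm : Measurable V)
    (h1 : Z V 1 = 1) : Integrable V (dm V) :=
  ProbabilityTheory.integrable_of_mem_interior_integrableExpSet (zero_mem hE hV hm h1)

lemma cgf_concave (hE : PL E) {V : E → ℝ} (hV : ConvexOn ℝ Set.univ V) (hm : Measurable V)
    (h1 : Z V 1 = 1) :
    ConcaveOn ℝ (Set.Iio 1) (fun β => ProbabilityTheory.cgf V (dm V) β
      + Module.finrank ℝ E * Real.log (1 - β)) := by
  have e : ∀ β ∈ Set.Iio (1:ℝ), ProbabilityTheory.cgf V (dm V) β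
      + Module.finrank ℝ E * Real.log (1 - β) = Real.log (G V (1 - β)).toReal := by
    intro β hβ
    have hβ : 0 < 1 - β := sub_pos.2 hβ
    have hz : 0 < (Z V (1 - β)).toReal :=
      ENNReal.toReal_pos (Z_pos hm _) (Z_ne_top hE hV hm h1 hβ)
    rw [ProbabilityTheory.cgf, mgf_eq hm, G_eq hm hβ, ENNReal.toReal_mul,
      ENNReal.toReal_ofReal (by positivity), Real.log_mul (by positivity) hz.ne', Real.log_pow]
    ring
  have hG1 : G V 1 ≠ ∞ := by rw [G_eq hm one_pos, h1]; simp
  have hp : ∀ s, 0 < s → 0 < (G V s).toReal := fun s hs =>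
    ENNReal.toReal_pos (G_pos hm hs) (G_ne_top hE hV hm hG1 hs)
  rw [concaveOn_iff_forall_pos]
  refine ⟨convex_Iio _, ?_⟩
  intro x hx y hy a b ha hb hab
  have hz : a • x + b • y ∈ Set.Iio (1:ℝ) := convex_Iio _ hx hy ha.le hb.le hab
  simp only [e x hx, e y hy, e _ hz]
  have hx : 0 < 1 - x := sub_pos.2 hx
  have hy : 0 < 1 - y := sub_pos.2 hy
  have h := G_logconcave hE hV hm hx hy ha hb hab
  have ez : a * (1 - x) + b * (1 - y) = 1 - (a • x + b • y) := by
    simp only [smul_eq_mul]; linear_combination hab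
  rw [ez] at h
  have h2 := ENNReal.toReal_mono (G_ne_top hE hV hm hG1 (sub_pos.2 hz)) h
  rw [ENNReal.toReal_mul, ← ENNReal.toReal_rpow, ← ENNReal.toReal_rpow] at h2
  have h3 := Real.log_le_log
    (mul_pos (Real.rpow_pos_of_pos (hp _ hx) _) (Real.rpow_pos_of_pos (hp _ hy) _)) h2
  rw [Real.log_mul (Real.rpow_pos_of_pos (hp _ hx) _).ne' (Real.rpow_pos_of_pos (hp _ hy) _).ne',
    Real.log_rpow (hp _ hx), Real.log_rpow (hp _ hy)] at h3
  simpa using h3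

lemma cgf_bound (hE : PL E) {V : E → ℝ} (hV : ConvexOn ℝ Set.univ V) (hm : Measurable V)
    (h1 : Z V 1 = 1) {β : ℝ} (hβ : β < 1) :
    ProbabilityTheory.cgf V (dm V) β ≤ β * ∫ x, V x ∂(dm V)
      + Module.finrank ℝ E * (-β - Real.log (1 - β)) := by
  have hprob := dm_prob h1
  have hc := cgf_concave hE hV hm h1
  have h0 := zero_mem hE hV hm h1
  have hd : HasDerivAt (ProbabilityTheory.cgf V (dm V)) (∫ x, V x ∂(dm V)) 0 := by
    have := (ProbabilityTheory.analyticAt_cgf h0).differentiableAt.hasDerivAt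
    rwa [ProbabilityTheory.deriv_cgf_zero h0, probReal_univ, div_one] at this
  have hd2 : HasDerivAt (fun β => ProbabilityTheory.cgf V (dm V) β
      + Module.finrank ℝ E * Real.log (1 - β)) (∫ x, V x ∂(dm V) - Module.finrank ℝ E) 0 := by
    have h3 : HasDerivAt (fun β : ℝ => Real.log (1 - β)) (-1 / (1 - 0)) 0 :=
      ((hasDerivAt_id (0:ℝ)).const_sub 1).log (by simp)
    refine (hd.add (h3.const_mul (Module.finrank ℝ E : ℝ))).congr_deriv ?_
    ring
  rcases lt_trichotomy β 0 with h | h | h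
  · have := hc.le_slope_of_hasDerivAt (Set.mem_Iio.2 hβ) (Set.mem_Iio.2 one_pos) h hd2
    rw [slope_def_field, le_div_iff₀ (by linarith)] at this
    simp at this
    linarith
  · subst h; simp
  · have := hc.slope_le_of_hasDerivAt (Set.mem_Iio.2 one_pos) (Set.mem_Iio.2 hβ) h hd2
    rw [slope_def_field, div_le_iff₀ (by linarith)] at this
    simp at this
    linarith

lemma log_bound {β : ℝ} (h : |β| ≤ 1 / 2) : -β - Real.log (1 - β) ≤ 2 * β ^ 2 := by
  have hb := abs_le.1 h
  have h1 := Real.one_sub_inv_le_log_of_pos (show 0 < 1 - β by linarith)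
  have h2 : (1 - β)⁻¹ - 1 - β ≤ 2 * β ^ 2 := by
    have : (1 - β)⁻¹ - 1 - β = β ^ 2 / (1 - β) := by
      have : (1 - β) ≠ 0 := by linarith
      field_simp; ring
    rw [this, div_le_iff₀ (by linarith)]
    nlinarith [sq_nonneg β]
  linarith

lemma cgf_bound' (hE : PL E) {V : E → ℝ} (hV : ConvexOn ℝ Set.univ V) (hm : Measurable V)
    (h1 : Z V 1 = 1) {β : ℝ} (hβ : |β| ≤ 1 / 2) :
    ProbabilityTheory.cgf V (dm V) β ≤ β * ∫ x, V x ∂(dm V) + Module.finrank ℝ E * (2 * β ^ 2) := by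
  refine (cgf_bound hE hV hm h1 (by linarith [le_abs_self β])).trans ?_
  gcongr
  exact log_bound hβ

/-- The Fradelizi–Madiman–Wang concentration bound. -/
lemma fmw (hE : PL E) {V : E → ℝ} (hV : ConvexOn ℝ Set.univ V) (hm : Measurable V)
    (h1 : Z V 1 = 1) (hn : 0 < Module.finrank ℝ E) {s : ℝ} (hs : 0 ≤ s) :
    (dm V) {p | s < |V p - ∫ q, V q ∂(dm V)|}
      ≤ ENNReal.ofReal (2 * Real.exp (-(1 / 8) * min s (s ^ 2 / Module.finrank ℝ E))) := by
  have hprob := dm_prob h1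
  set n : ℝ := ((Module.finrank ℝ E : ℕ) : ℝ) with hnd
  have hn : 0 < n := by simpa [hnd] using hn
  set m := ∫ q, V q ∂(dm V) with hmd
  obtain ⟨β, hβ0, hβ1, hβ⟩ : ∃ β : ℝ, 0 ≤ β ∧ β ≤ 1 / 2 ∧
      -β * s + n * (2 * β ^ 2) ≤ -(1 / 8) * min s (s ^ 2 / n) := by
    by_cases h : s ≤ 2 * n
    · refine ⟨s / (4 * n), by positivity, ?_, ?_⟩
      · rw [div_le_iff₀ (by positivity)]; linarith
      · have : -(s / (4 * n)) * s + n * (2 * (s / (4 * n)) ^ 2) = -(1 / 8) * (s ^ 2 / n) := by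
          field_simp; ring
        rw [this]
        have := min_le_right s (s ^ 2 / n)
        linarith
    · refine ⟨1 / 2, by norm_num, le_rfl, ?_⟩
      have := min_le_left s (s ^ 2 / n)
      push Not at h
      nlinarith
  have up := ProbabilityTheory.measure_ge_le_exp_cgf (X := V) (μ := dm V) (m + s) hβ0
    (int_exp hE hV hm h1 (by linarith))
  have lo := ProbabilityTheory.measure_le_le_exp_cgf (X := V) (μ := dm V) (m - s)
    (neg_nonpos.2 hβ0) (int_exp hE hV hm h1 (by linarith))
  have c1 := cgf_bound' hE hV hm h1 (β := β) (by rwa [abs_of_nonneg hβ0])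
  have c2 := cgf_bound' hE hV hm h1 (β := -β) (by rwa [abs_neg, abs_of_nonneg hβ0])
  rw [← hmd, ← hnd] at c1 c2
  have up' := up.trans (Real.exp_le_exp.2 (show _ ≤ -(1 / 8) * min s (s ^ 2 / n) by linarith))
  have lo' := lo.trans (Real.exp_le_exp.2 (show _ ≤ -(1 / 8) * min s (s ^ 2 / n) by
    rw [neg_sq] at c2; linarith))
  rw [← ofReal_measureReal]
  apply ENNReal.ofReal_le_ofReal
  calc (dm V).real {p | s < |V p - m|}
      ≤ (dm V).real ({p | m + s ≤ V p} ∪ {p | V p ≤ m - s}) := by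
        refine measureReal_mono ?_ (measure_ne_top _ _)
        intro p hp
        rcases lt_abs.1 (show s < |V p - m| from hp) with h | h
        · left; show m + s ≤ V p; linarith
        · right; show V p ≤ m - s; linarith
    _ ≤ _ := measureReal_union_le _ _
    _ ≤ _ := by linarith

end FMW

section Marginal

variable {d : ℕ}

/-- The first marginal of `e^{-W}`. -/
noncomputable def marg (W : EuclideanSpace ℝ (Fin d) × EuclideanSpace ℝ (Fin d) → ℝ)
    (x : EuclideanSpace ℝ (Fin d)) : ℝ≥0∞ :=
  ∫⁻ y, ENNReal.ofReal (Real.exp (-W (x, y)))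

variable {W : EuclideanSpace ℝ (Fin d) × EuclideanSpace ℝ (Fin d) → ℝ}

lemma marg_meas (hm : Measurable W) : Measurable (marg W) :=
  Measurable.lintegral_prod_right' (f := fun p => ENNReal.ofReal (Real.exp (-W p))) (by fun_prop)

lemma marg_pos (hm : Measurable W) (x) : marg W x ≠ 0 := by
  have := Z_pos (V := fun y => W (x, y)) (by fun_prop) 1
  simpa [Z, marg] using this

lemma marg_logconcave (hW : ConvexOn ℝ Set.univ W) (hm : Measurable W)
    (x y : EuclideanSpace ℝ (Fin d))
    {a b : ℝ} (ha : 0 < a) (hb : 0 < b) (hab : a + b = 1) :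
    marg W x ^ a * marg W y ^ b ≤ marg W (a • x + b • y) := by
  refine pl_euclidean d _ _ _ (by fun_prop) (by fun_prop) (by fun_prop) a b ha hb hab
    fun u v => ?_
  rw [ENNReal.ofReal_rpow_of_pos (Real.exp_pos _), ENNReal.ofReal_rpow_of_pos (Real.exp_pos _),
    ← ENNReal.ofReal_mul (by positivity), ← Real.exp_mul, ← Real.exp_mul, ← Real.exp_add]
  apply ENNReal.ofReal_le_ofReal
  apply Real.exp_le_exp.2
  have h := hW.2 (Set.mem_univ (x, u)) (Set.mem_univ (y, v)) ha.le hb.le hab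
  simp only [Prod.smul_mk, Prod.mk_add_mk, smul_eq_mul] at h
  linarith

lemma lint_marg (hm : Measurable W) : ∫⁻ x, marg W x = Z W 1 := by
  rw [Z, Measure.volume_eq_prod, lintegral_prod _ (by fun_prop)]
  simp [marg]

lemma marg_ne_top (hW : ConvexOn ℝ Set.univ W) (hm : Measurable W) (h1 : Z W 1 = 1) (x) :
    marg W x ≠ ∞ := by
  intro htop
  have hall : ∀ z, marg W z = ∞ := by
    intro z
    have h := marg_logconcave hW hm x ((2:ℝ) • z - x) (a := 1 / 2) (b := 1 / 2)
      (by norm_num) (by norm_num) (by norm_num)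
    have e : (1 / 2 : ℝ) • x + (1 / 2 : ℝ) • ((2:ℝ) • z - x) = z := by module
    rw [e, htop, ENNReal.top_rpow_of_pos (by norm_num), ENNReal.top_mul] at h
    · exact top_le_iff.1 h
    · intro h0
      rw [ENNReal.rpow_eq_zero_iff] at h0
      rcases h0 with h0 | h0
      · exact marg_pos hm _ h0.1
      · linarith [h0.2]
  have h2 := lint_marg hm
  rw [h1] at h2
  simp only [hall, lintegral_const] at h2
  rw [ENNReal.top_mul (by simpa using NeZero.ne (volume : Measure (EuclideanSpace ℝ (Fin d))))] at h2
  exact ENNReal.top_ne_one h2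

/-- The potential of the first marginal. -/
noncomputable def VX (W : EuclideanSpace ℝ (Fin d) × EuclideanSpace ℝ (Fin d) → ℝ)
    (x : EuclideanSpace ℝ (Fin d)) : ℝ := -Real.log (marg W x).toReal

lemma exp_VX (hW : ConvexOn ℝ Set.univ W) (hm : Measurable W) (h1 : Z W 1 = 1) (x) :
    ENNReal.ofReal (Real.exp (-VX W x)) = marg W x := by
  rw [VX, neg_neg, Real.exp_log (ENNReal.toReal_pos (marg_pos hm x) (marg_ne_top hW hm h1 x)),
    ENNReal.ofReal_toReal (marg_ne_top hW hm h1 x)]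

lemma VX_meas (hm : Measurable W) : Measurable (VX W) :=
  ((marg_meas hm).ennreal_toReal.log).neg

lemma VX_convex (hW : ConvexOn ℝ Set.univ W) (hm : Measurable W) (h1 : Z W 1 = 1) :
    ConvexOn ℝ Set.univ (VX W) := by
  have hp : ∀ x, 0 < (marg W x).toReal := fun x =>
    ENNReal.toReal_pos (marg_pos hm x) (marg_ne_top hW hm h1 x)
  rw [convexOn_iff_forall_pos]
  refine ⟨convex_univ, ?_⟩
  intro x _ y _ a b ha hb hab
  have h := marg_logconcave hW hm x y ha hb hab
  have h2 := ENNReal.toReal_mono (marg_ne_top hW hm h1 _) h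
  rw [ENNReal.toReal_mul, ← ENNReal.toReal_rpow, ← ENNReal.toReal_rpow] at h2
  have h3 := Real.log_le_log
    (mul_pos (Real.rpow_pos_of_pos (hp x) _) (Real.rpow_pos_of_pos (hp y) _)) h2
  rw [Real.log_mul (Real.rpow_pos_of_pos (hp x) _).ne' (Real.rpow_pos_of_pos (hp y) _).ne',
    Real.log_rpow (hp x), Real.log_rpow (hp y)] at h3
  simp only [VX, smul_eq_mul]
  linarith

lemma VX_Z (hW : ConvexOn ℝ Set.univ W) (hm : Measurable W) (h1 : Z W 1 = 1) :
    Z (VX W) 1 = 1 := by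
  rw [← h1, ← lint_marg hm, Z]
  simp only [one_mul, exp_VX hW hm h1]

lemma map_fst_dm (hW : ConvexOn ℝ Set.univ W) (hm : Measurable W) (h1 : Z W 1 = 1) :
    (dm W).map Prod.fst = dm (VX W) := by
  ext s hs
  rw [Measure.map_apply measurable_fst hs, dm, dm, withDensity_apply _ (measurable_fst hs),
    withDensity_apply _ hs]
  simp only [exp_VX hW hm h1]
  rw [← Set.prod_univ, Measure.volume_eq_prod, setLIntegral_prod _ (by fun_prop)]
  simp [marg]

end Marginal

instance haar_prod (d : ℕ) : (volume : Measure (EuclideanSpace ℝ (Fin d) ×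
    EuclideanSpace ℝ (Fin d))).IsAddHaarMeasure :=
  inferInstanceAs ((volume : Measure (EuclideanSpace ℝ (Fin d))).prod
    (volume : Measure (EuclideanSpace ℝ (Fin d)))).IsAddHaarMeasure

end CIC

/-- There are universal constants `c₁, c₂ > 0` such that for every dimension
`d`, every log-concave joint density `f(x,y) = e^{-W(x,y)}` on `ℝ^d × ℝ^d` (with `W` convex and
`∫ e^{-W} = 1`), the conditional information content `-log f(Y|X)` concentrates around the
conditional differential entropy: `P(|-log f(Y|X) - E[-log f(Y|X)]| > t) ≤
2 c₁ exp(-(c₂/2) min(t, t²/d))` for all `t ≥ 0`. -/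
theorem conditional_information_concentration :
    ∃ c₁ c₂ : ℝ, 0 < c₁ ∧ 0 < c₂ ∧
      ∀ (d : ℕ), 0 < d →
      ∀ (W : EuclideanSpace ℝ (Fin d) × EuclideanSpace ℝ (Fin d) → ℝ),
        ConvexOn ℝ Set.univ W →
        (∫ p, Real.exp (-W p)) = 1 →
      ∀ (μ : Measure (EuclideanSpace ℝ (Fin d) × EuclideanSpace ℝ (Fin d))),
        μ = volume.withDensity (fun p => ENNReal.ofReal (Real.exp (-W p))) →
      ∀ (fX : EuclideanSpace ℝ (Fin d) → ℝ),
        (∀ x, fX x = ∫ y, Real.exp (-W (x, y))) →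
      ∀ (ic : EuclideanSpace ℝ (Fin d) × EuclideanSpace ℝ (Fin d) → ℝ),
        (∀ p, ic p = -Real.log (Real.exp (-W p) / fX p.1)) →
      ∀ t : ℝ, 0 ≤ t →
        μ {p | t < |ic p - ∫ q, ic q ∂μ|}
          ≤ ENNReal.ofReal (2 * c₁ * Real.exp (-(c₂ / 2) * min t (t ^ 2 / d))) := by
  refine ⟨2, 1 / 32, by norm_num, by norm_num, ?_⟩
  intro d hd W hW hInt1 μ hμ fX hfX ic hic t ht
  have hm : Measurable W := by
    have := hW.continuousOn isOpen_univ
    rw [continuousOn_univ] at this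
    exact this.measurable
  have hZ : CIC.Z W 1 = 1 := by
    have hi : Integrable (fun p => Real.exp (-W p)) := by
      by_contra h
      rw [integral_undef h] at hInt1
      exact zero_ne_one hInt1
    have := ofReal_integral_eq_lintegral_ofReal hi (ae_of_all _ fun p => (Real.exp_pos _).le)
    rw [hInt1] at this
    simpa [CIC.Z] using this.symm
  have hμ' : μ = CIC.dm W := hμ
  subst hμ'
  have hPE := CIC.pl_euclidean d
  have hPP := CIC.pl_prod hPE hPE
  have hXm := CIC.VX_meas hm
  have hXc := CIC.VX_convex hW hm hZ
  have hXZ := CIC.VX_Z hW hm hZ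
  have hmap := CIC.map_fst_dm hW hm hZ
  have hicW : ∀ p, ic p = W p - CIC.VX W p.1 := by
    intro p
    have e : fX p.1 = (CIC.marg W p.1).toReal := by
      rw [hfX, integral_eq_lintegral_of_nonneg_ae (ae_of_all _ fun y => (Real.exp_pos _).le)
        (Measurable.aestronglyMeasurable (by fun_prop))]
      rfl
    have hp : 0 < (CIC.marg W p.1).toReal :=
      ENNReal.toReal_pos (CIC.marg_pos hm _) (CIC.marg_ne_top hW hm hZ _)
    rw [hic, e, Real.log_div (Real.exp_pos _).ne' hp.ne', Real.log_exp, CIC.VX]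
    ring
  have iW := CIC.int_V hPP hW hm hZ
  have iX := CIC.int_V hPE hXc hXm hXZ
  have iX' : Integrable (fun p => CIC.VX W p.1) (CIC.dm W) := by
    rw [← hmap] at iX
    exact iX.comp_measurable measurable_fst
  have eX : ∫ p, CIC.VX W p.1 ∂(CIC.dm W) = ∫ x, CIC.VX W x ∂(CIC.dm (CIC.VX W)) := by
    rw [← hmap, integral_map measurable_fst.aemeasurable hXm.aestronglyMeasurable]
  have hE : ∫ q, ic q ∂(CIC.dm W)
      = ∫ q, W q ∂(CIC.dm W) - ∫ x, CIC.VX W x ∂(CIC.dm (CIC.VX W)) := by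
    simp only [hicW]
    rw [integral_sub iW iX', eX]
  have hd' : (0 : ℝ) < d := by exact_mod_cast hd
  have b1 := CIC.fmw hPP hW hm hZ (by simp; omega) (s := t / 2) (by positivity)
  have b2 := CIC.fmw hPE hXc hXm hXZ (by simpa using hd) (s := t / 2) (by positivity)
  rw [← hmap, Measure.map_apply measurable_fst
    (measurableSet_lt measurable_const (by fun_prop)), hmap] at b2
  simp only [Module.finrank_prod, finrank_euclideanSpace, Fintype.card_fin] at b1 b2
  set A := ∫ q, W q ∂(CIC.dm W)
  set B := ∫ x, CIC.VX W x ∂(CIC.dm (CIC.VX W))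
  have hmin : ∀ n : ℝ, 0 < n → n ≤ 2 * d → -(1 / 8) * min (t / 2) ((t / 2) ^ 2 / n)
      ≤ -(1 / 32 / 2) * min t (t ^ 2 / d) := by
    intro n hn hn2
    have h1 : min t (t ^ 2 / d) / 8 ≤ min (t / 2) ((t / 2) ^ 2 / n) := by
      apply le_min
      · linarith [min_le_left t (t ^ 2 / d)]
      · have h3 : (t / 2) ^ 2 / (2 * d) ≤ (t / 2) ^ 2 / n := by gcongr
        have h4 : (t / 2) ^ 2 / (2 * d) = t ^ 2 / d / 8 := by field_simp; ring
        linarith [min_le_right t (t ^ 2 / d)]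
    linarith
  calc CIC.dm W {p | t < |ic p - ∫ q, ic q ∂(CIC.dm W)|}
      ≤ CIC.dm W ({p | t / 2 < |W p - A|} ∪ Prod.fst ⁻¹' {x | t / 2 < |CIC.VX W x - B|}) := by
        apply measure_mono
        intro p hp
        have hp : t < |ic p - ∫ q, ic q ∂(CIC.dm W)| := hp
        rw [hE, hicW] at hp
        by_contra hcon
        rw [Set.mem_union, not_or] at hcon
        have h1 : |W p - A| ≤ t / 2 := not_lt.1 hcon.1
        have h2 : |CIC.VX W p.1 - B| ≤ t / 2 := not_lt.1 hcon.2
        have e : W p - CIC.VX W p.1 - (A - B) = (W p - A) - (CIC.VX W p.1 - B) := by ring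
        rw [e] at hp
        have := abs_sub (W p - A) (CIC.VX W p.1 - B)
        linarith
    _ ≤ _ := measure_union_le _ _
    _ ≤ _ := add_le_add b1 b2
    _ = _ := (ENNReal.ofReal_add (by positivity) (by positivity)).symm
    _ ≤ _ := by
        apply ENNReal.ofReal_le_ofReal
        have k1 := Real.exp_le_exp.2 (hmin ((d + d : ℕ) : ℝ) (by push_cast; positivity)
          (by push_cast; linarith))
        have k2 := Real.exp_le_exp.2 (hmin d hd' (by linarith))
        linarith
end

section
/- There exist universal constants c₁, c₂ > 0 such that the following holds for every dimension d: if f(x, y) is a log-concave joint probability density on ℝ^d × ℝ^d of a random pair (X, Y), with marginal densities f(x) := ∫ f(x, y) dy and f(y) := ∫ f(x, y) dx, then the information density satisfies P( | −log ( f(X,Y) / (f(X) f(Y)) ) − E[ −log ( f(X,Y) / (f(X) f(Y)) ) ] | > t ) ≤ 3 c₁ exp( −(c₂/3) min(t, t²/d) ) for all t ≥ 0, where the expectation E[−log(f(X,Y)/(f(X)f(Y)))] = I(X;Y) is the mutual information. -/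
open MeasureTheory Real
open scoped Pointwise

lemma sum_set_1d {A B C : Set ℝ} (hA : MeasurableSet A) (hB : MeasurableSet B)
    (hAn : A.Nonempty) (hBn : B.Nonempty) (h : ∀ x ∈ A, ∀ y ∈ B, x + y ∈ C) :
    volume A + volume B ≤ volume C := by
  have key : ∀ K ⊆ A, IsCompact K → ∀ L ⊆ B, IsCompact L → volume K + volume L ≤ volume C := by
    intro K hKA hK L hLB hL
    rcases K.eq_empty_or_nonempty with rfl | hKn
    · obtain ⟨x, hx⟩ := hAn
      have h1 : (fun y => x + y) '' L ⊆ C := by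
        rintro _ ⟨y, hy, rfl⟩; exact h x hx y (hLB hy)
      have h2 : volume ((fun y => x + y) '' L) = volume L := by
        simp [Set.image_add_left, measure_preimage_add]
      simp only [measure_empty, zero_add]
      rw [← h2]; exact measure_mono h1
    rcases L.eq_empty_or_nonempty with rfl | hLn
    · obtain ⟨x, hx⟩ := hBn
      have h1 : (fun y => x + y) '' K ⊆ C := by
        rintro _ ⟨y, hy, rfl⟩
        have := h y (hKA hy) x hx
        simpa [add_comm] using this
      have h2 : volume ((fun y => x + y) '' K) = volume K := by
        simp [Set.image_add_left, measure_preimage_add]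
      simp only [measure_empty, add_zero]
      rw [← h2]; exact measure_mono h1
    obtain ⟨k, hk, hkmax⟩ := hK.exists_isGreatest hKn
    obtain ⟨l, hl, hlmin⟩ := hL.exists_isLeast hLn
    have e1 : volume ((fun y => l + y) '' K) = volume K := by
      simp [Set.image_add_left, measure_preimage_add]
    have e2 : volume ((fun y => k + y) '' L) = volume L := by
      simp [Set.image_add_left, measure_preimage_add]
    have hd : volume (((fun y => l + y) '' K) ∩ ((fun y => k + y) '' L)) = 0 := by
      refine measure_mono_null (t := {k + l}) ?_ (by simp)
      rintro z ⟨⟨x, hx, rfl⟩, ⟨y, hy, hxy⟩⟩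
      have h1 := hkmax hx
      have h2 := hlmin hy
      simp only [Set.mem_singleton_iff] at *
      linarith
    have hm : MeasurableSet ((fun y => k + y) '' L) :=
      (hL.image (by fun_prop)).measurableSet
    have := measure_union_add_inter (μ := volume) ((fun y => l + y) '' K) hm
    rw [hd, add_zero, e1, e2] at this
    rw [← this]
    apply measure_mono
    rintro z (⟨x, hx, rfl⟩ | ⟨y, hy, rfl⟩)
    · have := h x (hKA hx) l (hLB hl)
      simpa [add_comm] using this
    · exact h k (hKA hk) y (hLB hy)
  rw [hA.measure_eq_iSup_isCompact, hB.measure_eq_iSup_isCompact]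
  simp only [iSup_and']
  refine ENNReal.biSup_add_biSup_le (s := {K : Set ℝ | K ⊆ A ∧ IsCompact K})
    (t := {K : Set ℝ | K ⊆ B ∧ IsCompact K}) ⟨∅, by simp⟩ ⟨∅, by simp⟩ ?_
  rintro K ⟨h1, h2⟩ L ⟨h3, h4⟩
  exact key K h1 h2 L h3 h4

lemma amgm_enn {a b : ℝ} (ha : 0 < a) (hb : 0 < b) (hab : a + b = 1) (u v : ENNReal) :
    u ^ a * v ^ b ≤ ENNReal.ofReal a * u + ENNReal.ofReal b * v := by
  have hpq : (1 / a).HolderConjugate (1 / b) := by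
    rw [Real.holderConjugate_iff]
    constructor
    · rw [lt_div_iff₀ ha]; linarith
    · simp [hab]
  have := ENNReal.young_inequality (u ^ a) (v ^ b) hpq
  rw [← ENNReal.rpow_mul, ← ENNReal.rpow_mul, mul_one_div_cancel ha.ne', mul_one_div_cancel hb.ne',
    ENNReal.rpow_one, ENNReal.rpow_one] at this
  rw [one_div, one_div, ENNReal.ofReal_inv_of_pos ha, ENNReal.ofReal_inv_of_pos hb,
    div_eq_mul_inv, div_eq_mul_inv, inv_inv, inv_inv] at this
  rwa [mul_comm u, mul_comm v] at this

lemma pl_1d_norm {a b : ℝ} (ha : 0 < a) (hb : 0 < b) (hab : a + b = 1) {f g h : ℝ → ℝ}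
    (hf : Measurable f) (hg : Measurable g) (hh : Measurable h)
    (hf0 : ∀ x, 0 ≤ f x) (hg0 : ∀ x, 0 ≤ g x) (hh0 : ∀ x, 0 ≤ h x)
    (hf1 : ∀ x, f x ≤ 1) (hg1 : ∀ x, g x ≤ 1)
    (hfs : ∀ s < 1, ∃ x, s < f x) (hgs : ∀ s < 1, ∃ x, s < g x)
    (H : ∀ x y, f x ^ a * g y ^ b ≤ h (a • x + b • y)) :
    ENNReal.ofReal a * (∫⁻ x, ENNReal.ofReal (f x)) + ENNReal.ofReal b * (∫⁻ x, ENNReal.ofReal (g x))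
      ≤ ∫⁻ x, ENNReal.ofReal (h x) := by
  rw [lintegral_eq_lintegral_meas_lt _ (ae_of_all _ hf0) hf.aemeasurable,
    lintegral_eq_lintegral_meas_lt _ (ae_of_all _ hg0) hg.aemeasurable,
    lintegral_eq_lintegral_meas_lt _ (ae_of_all _ hh0) hh.aemeasurable]
  have mf : Measurable fun t => volume {x | t < f x} :=
    Antitone.measurable fun s t hst => measure_mono fun x hx => lt_of_le_of_lt hst hx
  have mg : Measurable fun t => volume {x | t < g x} :=
    Antitone.measurable fun s t hst => measure_mono fun x hx => lt_of_le_of_lt hst hx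
  rw [← lintegral_const_mul _ mf, ← lintegral_const_mul _ mg, ← lintegral_add_left (mf.const_mul _)]
  refine setLIntegral_mono' measurableSet_Ioi ?_
  intro t ht
  have ht : 0 < t := ht
  by_cases ht1 : t < 1
  · have e : ∀ (c : ℝ) (hc : 0 < c) (S : Set ℝ), ENNReal.ofReal c * volume S = volume (c • S) := by
      intro c hc S
      rw [Measure.addHaar_smul]; simp [abs_of_pos hc]
    rw [e a ha, e b hb]
    apply sum_set_1d
    · exact (measurableSet_lt measurable_const hf).const_smul₀ a
    · exact (measurableSet_lt measurable_const hg).const_smul₀ b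
    · exact Set.Nonempty.smul_set (hfs t ht1)
    · exact Set.Nonempty.smul_set (hgs t ht1)
    · rintro _ ⟨x, hx, rfl⟩ _ ⟨y, hy, rfl⟩
      simp only [Set.mem_ofPred_eq] at *
      refine lt_of_lt_of_le ?_ (H x y)
      calc t = t ^ a * t ^ b := by rw [← Real.rpow_add ht, hab, Real.rpow_one]
        _ < f x ^ a * g y ^ b := by
          apply mul_lt_mul'' (Real.rpow_lt_rpow ht.le hx ha) (Real.rpow_lt_rpow ht.le hy hb) <;>
          positivity
  · have e1 : {x | t < f x} = ∅ := by
      ext x; simp; linarith [hf1 x]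
    have e2 : {x | t < g x} = ∅ := by
      ext x; simp; linarith [hg1 x]
    simp [e1, e2]

/-- The Prékopa–Leindler property of a measure space. -/
def PLprop (E : Type*) [AddCommGroup E] [Module ℝ E] [MeasureSpace E] : Prop :=
  ∀ a b : ℝ, 0 < a → 0 < b → a + b = 1 → ∀ f g h : E → ENNReal,
    Measurable f → Measurable g → Measurable h →
    (∀ x y, f x ^ a * g y ^ b ≤ h (a • x + b • y)) →
    (∫⁻ x, f x) ^ a * (∫⁻ x, g x) ^ b ≤ ∫⁻ x, h x

lemma pl_1d_bdd {a b : ℝ} (ha : 0 < a) (hb : 0 < b) (hab : a + b = 1) {f g h : ℝ → ENNReal}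
    (hf : Measurable f) (hg : Measurable g) (hh : Measurable h)
    (hfb : (⨆ x, f x) ≠ ⊤) (hgb : (⨆ x, g x) ≠ ⊤)
    (H : ∀ x y, f x ^ a * g y ^ b ≤ h (a • x + b • y)) :
    (∫⁻ x, f x) ^ a * (∫⁻ x, g x) ^ b ≤ ∫⁻ x, h x := by
  set F := ⨆ x, f x with hF
  set G := ⨆ x, g x with hG
  have hfF : ∀ x, f x ≤ F := le_iSup f
  have hgG : ∀ x, g x ≤ G := le_iSup g
  by_cases hF0 : F = 0
  · have : ∀ x, f x = 0 := fun x => le_antisymm (hF0 ▸ hfF x) bot_le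
    simp [this, ha]
  by_cases hG0 : G = 0
  · have : ∀ x, g x = 0 := fun x => le_antisymm (hG0 ▸ hgG x) bot_le
    simp [this, hb]
  set M := F ^ a * G ^ b with hM
  have hFa0 : F ^ a ≠ 0 := by simp [hF0, hfb]
  have hGa0 : G ^ b ≠ 0 := by simp [hG0, hgb]
  have hFat : F ^ a ≠ ⊤ := ENNReal.rpow_ne_top_of_nonneg ha.le hfb
  have hGat : G ^ b ≠ ⊤ := ENNReal.rpow_ne_top_of_nonneg hb.le hgb
  have hM0 : M ≠ 0 := mul_ne_zero hFa0 hGa0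
  have hMt : M ≠ ⊤ := ENNReal.mul_ne_top hFat hGat
  have hf1 : ∀ x, f x / F ≤ 1 := fun x => ENNReal.div_le_of_le_mul (by simpa using hfF x)
  have hg1 : ∀ x, g x / G ≤ 1 := fun x => ENNReal.div_le_of_le_mul (by simpa using hgG x)
  have sup1 : ∀ (f : ℝ → ENNReal) , (⨆ x, f x) ≠ ⊤ → (⨆ x, f x) ≠ 0 →
      ∀ s : ℝ, s < 1 → ∃ x, s < (f x / (⨆ x, f x)).toReal := by
    intro f hb h0 s hs
    by_contra! hcon
    set F := ⨆ x, f x with hF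
    have hfF : ∀ x, f x ≤ F := le_iSup f
    have h1 : ∀ x, f x ≤ ENNReal.ofReal s * F := by
      intro x
      have hx1 : f x / F ≠ ⊤ := 
        ((ENNReal.div_le_of_le_mul (by simpa using hfF x) : f x / F ≤ 1).trans_lt ENNReal.one_lt_top).ne
      have := hcon x
      rw [← ENNReal.div_le_iff h0 hb]
      exact (ENNReal.le_ofReal_iff_toReal_le hx1 (le_trans ENNReal.toReal_nonneg this)).2 this
    have h2 : F ≤ ENNReal.ofReal s * F := iSup_le h1
    have h3 : ENNReal.ofReal s * F < 1 * F := by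
      apply (ENNReal.mul_lt_mul_iff_left h0 hb).2
      simpa using hs
    rw [one_mul] at h3
    exact absurd h2 (not_le.2 h3)
  have hMx : ∀ x y, (f x / F) ^ a * (g y / G) ^ b ≤ h (a • x + b • y) / M := by
    intro x y
    rw [ENNReal.div_rpow_of_nonneg _ _ ha.le, ENNReal.div_rpow_of_nonneg _ _ hb.le,
      hM, ENNReal.le_div_iff_mul_le (Or.inl hM0) (Or.inl hMt)]
    calc f x ^ a / F ^ a * (g y ^ b / G ^ b) * (F ^ a * G ^ b)
        = (f x ^ a / F ^ a * F ^ a) * (g y ^ b / G ^ b * G ^ b) := by ring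
      _ = f x ^ a * g y ^ b := by
        rw [ENNReal.div_mul_cancel hFa0 hFat, ENNReal.div_mul_cancel hGa0 hGat]
      _ ≤ _ := H x y
  have key := pl_1d_norm ha hb hab (f := fun x => (f x / F).toReal) (g := fun x => (g x / G).toReal)
    (h := fun x => (min (h x / M) 1).toReal)
    (hf.div_const F).ennreal_toReal (hg.div_const G).ennreal_toReal
    ((hh.div_const M).min measurable_const).ennreal_toReal
    (fun _ => ENNReal.toReal_nonneg) (fun _ => ENNReal.toReal_nonneg) (fun _ => ENNReal.toReal_nonneg)
    (fun x => by simpa using ENNReal.toReal_mono ENNReal.one_ne_top (hf1 x))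
    (fun x => by simpa using ENNReal.toReal_mono ENNReal.one_ne_top (hg1 x))
    (sup1 f hfb hF0) (sup1 g hgb hG0)
    (by
      intro x y
      rw [ENNReal.toReal_rpow, ENNReal.toReal_rpow, ← ENNReal.toReal_mul]
      apply ENNReal.toReal_mono (by simp)
      refine le_min (hMx x y) ?_
      exact mul_le_one' (ENNReal.rpow_le_one (hf1 x) ha.le) (ENNReal.rpow_le_one (hg1 y) hb.le))
  have ne1 : ∀ u : ENNReal, u ≤ 1 → u ≠ ⊤ := fun u hu => (hu.trans_lt ENNReal.one_lt_top).ne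
  simp only [ENNReal.ofReal_toReal (ne1 _ (hf1 _)), ENNReal.ofReal_toReal (ne1 _ (hg1 _)),
    ENNReal.ofReal_toReal (ne1 _ (min_le_right _ _))] at key
  have key2 : (∫⁻ x, f x / F) ^ a * (∫⁻ x, g x / G) ^ b ≤ ∫⁻ x, h x / M :=
    (amgm_enn ha hb hab _ _).trans (key.trans (lintegral_mono fun x => min_le_left _ _))
  simp only [div_eq_mul_inv] at key2
  rw [lintegral_mul_const _ hf, lintegral_mul_const _ hg, lintegral_mul_const _ hh,
    ← div_eq_mul_inv, ← div_eq_mul_inv, ← div_eq_mul_inv,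
    ENNReal.div_rpow_of_nonneg _ _ ha.le, ENNReal.div_rpow_of_nonneg _ _ hb.le,
    ENNReal.le_div_iff_mul_le (Or.inl hM0) (Or.inl hMt)] at key2
  refine le_trans (le_of_eq ?_) key2
  symm
  calc _ = ((∫⁻ x, f x) ^ a / F ^ a * F ^ a) * ((∫⁻ x, g x) ^ b / G ^ b * G ^ b) := by
        rw [hM]; ring
    _ = _ := by
        rw [ENNReal.div_mul_cancel hFa0 hFat, ENNReal.div_mul_cancel hGa0 hGat]

lemma PL_real : PLprop ℝ := by
  intro a b ha hb hab f g h hf hg hh H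
  have key : ∀ N : ℕ, (∫⁻ x, min (f x) N) ^ a * (∫⁻ x, min (g x) N) ^ b ≤ ∫⁻ x, h x := by
    intro N
    apply pl_1d_bdd ha hb hab (hf.min measurable_const) (hg.min measurable_const) hh
    · exact ((iSup_le fun x => min_le_right _ _).trans_lt (ENNReal.natCast_lt_top N)).ne
    · exact ((iSup_le fun x => min_le_right _ _).trans_lt (ENNReal.natCast_lt_top N)).ne
    · intro x y
      refine le_trans ?_ (H x y)
      gcongr <;> exact min_le_left _ _
  have hm : ∀ f : ℝ → ENNReal, Measurable f →
      (∫⁻ x, f x) = ⨆ N : ℕ, ∫⁻ x, min (f x) N := by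
    intro f hf
    rw [← lintegral_iSup (fun N => hf.min measurable_const)]
    · congr 1; ext x
      have : (⨆ N : ℕ, min (f x) (N : ENNReal)) = min (f x) (⨆ N : ℕ, (N : ENNReal)) :=
        (inf_iSup_eq _ _).symm
      rw [this, ENNReal.iSup_natCast]; simp
    · intro m n hmn x
      exact min_le_min le_rfl (by exact_mod_cast hmn)
  have hmono : ∀ f : ℝ → ENNReal, Monotone fun N : ℕ => ∫⁻ x, min (f x) N := by
    intro f m n hmn
    exact lintegral_mono fun x => min_le_min le_rfl (by exact_mod_cast hmn)
  rw [hm f hf, hm g hg]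
  have hr : ∀ (c : ℝ) (hc : 0 < c) (u : ℕ → ENNReal), (⨆ N, u N) ^ c = ⨆ N, u N ^ c := by
    intro c hc u
    exact (ENNReal.orderIsoRpow c hc).map_iSup u
  rw [hr a ha, hr b hb, ENNReal.iSup_mul]
  refine iSup_le fun m => ?_
  rw [ENNReal.mul_iSup]
  refine iSup_le fun n => ?_
  refine le_trans ?_ (key (max m n))
  exact mul_le_mul' (ENNReal.rpow_le_rpow (hmono f (le_max_left _ _)) ha.le)
    (ENNReal.rpow_le_rpow (hmono g (le_max_right _ _)) hb.le)

lemma PL_prod {E F : Type*} [AddCommGroup E] [Module ℝ E] [MeasureSpace E]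
    [AddCommGroup F] [Module ℝ F] [MeasureSpace F] [SFinite (volume : Measure F)]
    (hE : PLprop E) (hF : PLprop F) : PLprop (E × F) := by
  intro a b ha hb hab f g h hf hg hh H
  rw [Measure.volume_eq_prod, lintegral_prod _ hf.aemeasurable, lintegral_prod _ hg.aemeasurable,
    lintegral_prod _ hh.aemeasurable]
  refine hE a b ha hb hab _ _ _ hf.lintegral_prod_right' hg.lintegral_prod_right'
    hh.lintegral_prod_right' ?_
  intro x x'
  refine hF a b ha hb hab _ _ _ (hf.comp measurable_prodMk_left) (hg.comp measurable_prodMk_left)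
    (hh.comp measurable_prodMk_left) ?_
  intro y y'
  exact H (x, y) (x', y')

lemma PL_map {E F : Type*} [AddCommGroup E] [Module ℝ E] [MeasureSpace E]
    [AddCommGroup F] [Module ℝ F] [MeasureSpace F]
    (φ : E → F) (hφ : MeasurePreserving φ) (hl : ∀ (a b : ℝ) x y, φ (a • x + b • y) = a • φ x + b • φ y)
    (hE : PLprop E) : PLprop F := by
  intro a b ha hb hab f g h hf hg hh H
  rw [← hφ.lintegral_comp hf, ← hφ.lintegral_comp hg, ← hφ.lintegral_comp hh]
  refine hE a b ha hb hab _ _ _ (hf.comp hφ.measurable) (hg.comp hφ.measurable)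
    (hh.comp hφ.measurable) ?_
  intro x y
  rw [hl]; exact H _ _

lemma PL_pi (n : ℕ) : PLprop (Fin n → ℝ) := by
  induction n with
  | zero =>
    intro a b ha hb hab f g h hf hg hh H
    rw [volume_pi, Measure.pi_of_empty (x := 0)]
    rw [lintegral_dirac' _ hf, lintegral_dirac' _ hg, lintegral_dirac' _ hh]
    simpa using H 0 0
  | succ n ih =>
    have h1 := (volume_preserving_piFinSuccAbove (fun _ : Fin (n + 1) => ℝ) 0).symm
    refine PL_map (E := ℝ × (Fin n → ℝ)) _ h1 ?_ (PL_prod PL_real ih)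
    intro a b x y
    ext i
    refine Fin.cases ?_ (fun i => ?_) i <;> simp [MeasurableEquiv.piFinSuccAbove]

lemma PL_euc (n : ℕ) : PLprop (EuclideanSpace ℝ (Fin n)) :=
  PL_map _ (PiLp.volume_preserving_toLp (Fin n)) (fun _ _ _ _ => rfl) (PL_pi n)

section conc
set_option linter.unusedSectionVars false
variable {E : Type*} [NormedAddCommGroup E] [NormedSpace ℝ E] [FiniteDimensional ℝ E]
  [MeasureSpace E] [BorelSpace E] [(volume : Measure E).IsAddHaarMeasure]

lemma convex_measurable {V : E → ℝ} (hV : ConvexOn ℝ Set.univ V) : Measurable V :=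
  hV.locallyLipschitz.continuous.measurable

lemma scale_lintegral {φ : E → ENNReal} (hφ : Measurable φ) {α : ℝ} (hα : 0 < α) :
    ∫⁻ x, φ (α⁻¹ • x) = ENNReal.ofReal (α ^ Module.finrank ℝ E) * ∫⁻ x, φ x := by
  have h := Measure.map_addHaar_smul (volume : Measure E) (inv_ne_zero hα.ne')
  rw [← lintegral_map (f := φ) (g := fun x : E => α⁻¹ • x) hφ (by fun_prop), h,
    lintegral_smul_measure]
  have : |((α⁻¹) ^ Module.finrank ℝ E)⁻¹| = α ^ Module.finrank ℝ E := by
    rw [inv_pow, inv_inv, abs_of_pos (by positivity)]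
  rw [this]; rfl

/-- partition function -/
noncomputable def Zfun (V : E → ℝ) (α : ℝ) : ENNReal := ∫⁻ x, ENNReal.ofReal (Real.exp (-(α * V x)))

lemma ofReal_exp_rpow (u a : ℝ) :
    (ENNReal.ofReal (Real.exp u)) ^ a = ENNReal.ofReal (Real.exp (a * u)) := by
  rw [ENNReal.ofReal_rpow_of_pos (Real.exp_pos _), ← Real.exp_mul, mul_comm]

lemma Zfun_pl (hPL : PLprop E) {V : E → ℝ} (hV : ConvexOn ℝ Set.univ V) {α β a b : ℝ}
    (hα : 0 < α) (hβ : 0 < β) (ha : 0 < a) (hb : 0 < b) (hab : a + b = 1) :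
    (ENNReal.ofReal (α ^ Module.finrank ℝ E) * Zfun V α) ^ a *
      (ENNReal.ofReal (β ^ Module.finrank ℝ E) * Zfun V β) ^ b ≤
    ENNReal.ofReal ((a * α + b * β) ^ Module.finrank ℝ E) * Zfun V (a * α + b * β) := by
  have hm := convex_measurable hV
  have hmm : ∀ γ : ℝ, Measurable fun x => ENNReal.ofReal (Real.exp (-(γ * V x))) := by
    intro γ; fun_prop
  have hγ : 0 < a * α + b * β := by positivity
  set γ := a * α + b * β with hγdef
  unfold Zfun
  rw [← scale_lintegral (hmm α) hα, ← scale_lintegral (hmm β) hβ, ← scale_lintegral (hmm γ) hγ]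
  refine hPL a b ha hb hab _ _ _ ((hmm α).comp (measurable_const_smul _))
    ((hmm β).comp (measurable_const_smul _)) ((hmm γ).comp (measurable_const_smul _)) ?_
  intro x y
  rw [ofReal_exp_rpow, ofReal_exp_rpow, ← ENNReal.ofReal_mul (Real.exp_pos _).le,
    ← Real.exp_add]
  apply ENNReal.ofReal_le_ofReal
  apply Real.exp_le_exp.2
  have e : γ⁻¹ • (a • x + b • y) = (a * α / γ) • (α⁻¹ • x) + (b * β / γ) • (β⁻¹ • y) := by
    simp only [smul_add, smul_smul]
    congr 2 <;> field_simp
  have h2 := hV.2 (Set.mem_univ (α⁻¹ • x)) (Set.mem_univ (β⁻¹ • y))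
    (show 0 ≤ a * α / γ by positivity) (show 0 ≤ b * β / γ by positivity)
    (by rw [← add_div, ← hγdef, div_self hγ.ne'])
  rw [← e] at h2
  have h3 := mul_le_mul_of_nonneg_left h2 hγ.le
  simp only [smul_eq_mul] at h3
  have h4 : γ * (a * α / γ * V (α⁻¹ • x) + b * β / γ * V (β⁻¹ • y)) =
    a * α * V (α⁻¹ • x) + b * β * V (β⁻¹ • y) := by field_simp
  rw [h4] at h3
  linarith

lemma Zfun_pos {V : E → ℝ} (hV : ConvexOn ℝ Set.univ V) (α : ℝ) : Zfun V α ≠ 0 := by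
  have hm := convex_measurable hV
  unfold Zfun
  rw [Ne, lintegral_eq_zero_iff (by fun_prop)]
  intro h
  have h2 : ∀ᵐ x : E, False := by
    filter_upwards [h] with x hx
    simp only [Pi.zero_apply, ENNReal.ofReal_eq_zero] at hx
    exact absurd hx (not_le.2 (Real.exp_pos _))
  rw [Filter.eventually_false_iff_eq_bot, ae_eq_bot] at h2
  exact NeZero.ne (volume : Measure E) h2

/-- key two-point inequality -/
lemma Zfun_two (hPL : PLprop E) {V : E → ℝ} (hV : ConvexOn ℝ Set.univ V) (h1 : Zfun V 1 = 1)
    {α ε : ℝ} (hα : 0 < α) (hε : 0 < ε) (hs : 0 < 1 - ε * (α - 1)) :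
    (ENNReal.ofReal (α ^ Module.finrank ℝ E) * Zfun V α) ^ (ε / (1 + ε)) *
      (ENNReal.ofReal ((1 - ε * (α - 1)) ^ Module.finrank ℝ E) * Zfun V (1 - ε * (α - 1))) ^
        (1 / (1 + ε)) ≤ 1 := by
  have := Zfun_pl hPL hV (a := ε / (1 + ε)) (b := 1 / (1 + ε)) hα hs (by positivity) (by positivity)
    (by field_simp; ring)
  have e : ε / (1 + ε) * α + 1 / (1 + ε) * (1 - ε * (α - 1)) = 1 := by field_simp; ring
  rw [e, h1] at this
  simpa using this

lemma exists_eps (δ : ℝ) : ∃ ε₀ : ℝ, 0 < ε₀ ∧ ∀ ε, 0 < ε → ε ≤ ε₀ → 0 < 1 - ε * δ := by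
  refine ⟨1 / (1 + |δ|), by positivity, fun ε h h' => ?_⟩
  rw [le_div_iff₀ (by positivity)] at h'
  nlinarith [le_abs_self δ]

lemma Zfun_lt_top (hPL : PLprop E) {V : E → ℝ} (hV : ConvexOn ℝ Set.univ V) (h1 : Zfun V 1 = 1)
    {α : ℝ} (hα : 0 < α) : Zfun V α ≠ ⊤ := by
  intro htop
  obtain ⟨ε, hε, hs⟩ := exists_eps (α - 1)
  have hs := hs ε hε le_rfl
  have h := Zfun_two hPL hV h1 hα hε hs
  have hp : ENNReal.ofReal (α ^ Module.finrank ℝ E) ≠ 0 := by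
    simp only [ne_eq, ENNReal.ofReal_eq_zero, not_le]; positivity
  have hp2 : ENNReal.ofReal ((1 - ε * (α - 1)) ^ Module.finrank ℝ E) ≠ 0 := by
    simp only [ne_eq, ENNReal.ofReal_eq_zero, not_le]; positivity
  rw [htop, ENNReal.mul_top hp, ENNReal.top_rpow_of_pos (by positivity), ENNReal.top_mul] at h
  · simp at h
  · rw [Ne, ENNReal.rpow_eq_zero_iff_of_pos (by positivity)]
    exact mul_ne_zero hp2 (Zfun_pos hV _)

/-- the probability measure with density `exp (-V)` -/
noncomputable def gibbs (V : E → ℝ) : Measure E :=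
  volume.withDensity fun x => ENNReal.ofReal (Real.exp (-V x))

lemma gibbs_prob {V : E → ℝ} (h1 : Zfun V 1 = 1) : IsProbabilityMeasure (gibbs V) := by
  constructor
  rw [gibbs, withDensity_apply _ MeasurableSet.univ]
  simpa [Zfun] using h1

lemma gibbs_lintegral {V : E → ℝ} (hV : ConvexOn ℝ Set.univ V) (β : ℝ) :
    ∫⁻ x, ENNReal.ofReal (Real.exp (β * V x)) ∂(gibbs V) = Zfun V (1 - β) := by
  have hm := convex_measurable hV
  rw [gibbs, lintegral_withDensity_eq_lintegral_mul _ (by fun_prop) (by fun_prop), Zfun]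
  congr 1; ext x
  rw [Pi.mul_apply, ← ENNReal.ofReal_mul (Real.exp_pos _).le, ← Real.exp_add]
  congr 2; ring

lemma gibbs_int_exp (hPL : PLprop E) {V : E → ℝ} (hV : ConvexOn ℝ Set.univ V) (h1 : Zfun V 1 = 1)
    {β : ℝ} (hβ : β < 1) : Integrable (fun x => Real.exp (β * V x)) (gibbs V) := by
  have hm := convex_measurable hV
  refine ⟨by fun_prop, ?_⟩
  rw [hasFiniteIntegral_iff_ofReal (ae_of_all _ fun x => (Real.exp_pos _).le), gibbs_lintegral hV]
  exact lt_top_iff_ne_top.2 (Zfun_lt_top hPL hV h1 (by linarith))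

lemma gibbs_integral_exp {V : E → ℝ} (hV : ConvexOn ℝ Set.univ V) (β : ℝ) :
    ∫ x, Real.exp (β * V x) ∂(gibbs V) = (Zfun V (1 - β)).toReal := by
  have hm := convex_measurable hV
  rw [integral_eq_lintegral_of_nonneg_ae (ae_of_all _ fun x => (Real.exp_pos _).le) (by fun_prop),
    gibbs_lintegral hV]

lemma gibbs_int (hPL : PLprop E) {V : E → ℝ} (hV : ConvexOn ℝ Set.univ V) (h1 : Zfun V 1 = 1) :
    Integrable V (gibbs V) := by
  have hm := convex_measurable hV
  have i1 := gibbs_int_exp hPL hV h1 (β := 1/2) (by norm_num)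
  have i2 := gibbs_int_exp hPL hV h1 (β := -(1/2)) (by norm_num)
  refine ((i1.add i2).const_mul 2).mono' (by fun_prop) (ae_of_all _ fun x => ?_)
  have e1 := Real.add_one_le_exp (1/2 * V x)
  have e2 := Real.add_one_le_exp (-(1/2) * V x)
  have p1 := Real.exp_pos (1/2 * V x)
  have p2 := Real.exp_pos (-(1/2) * V x)
  simp only [Pi.add_apply, Real.norm_eq_abs]
  rw [abs_le]; constructor <;> linarith

lemma gibbs_jensen (hPL : PLprop E) {V : E → ℝ} (hV : ConvexOn ℝ Set.univ V) (h1 : Zfun V 1 = 1)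
    {s : ℝ} (hs : 0 < s) :
    Real.exp ((1 - s) * ∫ x, V x ∂(gibbs V)) ≤ (Zfun V s).toReal := by
  have := gibbs_prob h1
  set m := ∫ x, V x ∂(gibbs V) with hmdef
  have hi := gibbs_int hPL hV h1
  have hie := gibbs_int_exp hPL hV h1 (β := 1 - s) (by linarith)
  have hz := gibbs_integral_exp hV (1 - s)
  rw [sub_sub_cancel] at hz
  rw [← hz]
  have hpt : ∀ x, Real.exp ((1 - s) * m) * (1 + ((1 - s) * V x - (1 - s) * m)) ≤
      Real.exp ((1 - s) * V x) := by
    intro x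
    have := Real.add_one_le_exp ((1 - s) * V x - (1 - s) * m)
    calc _ ≤ Real.exp ((1 - s) * m) * Real.exp ((1 - s) * V x - (1 - s) * m) := by
            gcongr; linarith
      _ = _ := by rw [← Real.exp_add]; congr 1; ring
  have hii : Integrable (fun x => (1 - s) * V x - (1 - s) * m) (gibbs V) :=
    (hi.const_mul _).sub (integrable_const _)
  have := integral_mono (((integrable_const (1:ℝ)).add hii).const_mul
    (Real.exp ((1 - s) * m))) hie hpt
  refine le_trans (le_of_eq ?_) this
  rw [integral_const_mul]
  simp only [Pi.add_apply]
  rw [integral_add (integrable_const _) hii, integral_sub (hi.const_mul _) (integrable_const _),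
    integral_const_mul, ← hmdef]
  simp

lemma gibbs_mgf_aux (hPL : PLprop E) {V : E → ℝ} (hV : ConvexOn ℝ Set.univ V) (h1 : Zfun V 1 = 1)
    {α : ℝ} (hα : 0 < α) :
    Module.finrank ℝ E * Real.log α + Real.log (Zfun V α).toReal ≤
      (α - 1) * (Module.finrank ℝ E - ∫ x, V x ∂(gibbs V)) := by
  set n : ℕ := Module.finrank ℝ E with hn
  set m := ∫ x, V x ∂(gibbs V) with hmdef
  obtain ⟨ε₀, hε₀, hs₀⟩ := exists_eps (α - 1)
  have key : ∀ ε, 0 < ε → ε ≤ ε₀ → n * Real.log α + Real.log (Zfun V α).toReal ≤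
      n * ((α - 1) / (1 - ε * (α - 1))) - (α - 1) * m := by
    intro ε hε hεε
    have hs := hs₀ ε hε hεε
    set s := 1 - ε * (α - 1) with hsdef
    have zα : 0 < (Zfun V α).toReal := ENNReal.toReal_pos (Zfun_pos hV _) (Zfun_lt_top hPL hV h1 hα)
    have zs : 0 < (Zfun V s).toReal := ENNReal.toReal_pos (Zfun_pos hV _) (Zfun_lt_top hPL hV h1 hs)
    have h := Zfun_two hPL hV h1 hα hε hs
    have h' := ENNReal.toReal_mono ENNReal.one_ne_top h
    rw [ENNReal.toReal_mul, ← ENNReal.toReal_rpow, ← ENNReal.toReal_rpow, ENNReal.toReal_mul,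
      ENNReal.toReal_mul, ENNReal.toReal_ofReal (by positivity),
      ENNReal.toReal_ofReal (by positivity), ENNReal.toReal_one] at h'
    have h2 := Real.log_le_log (by positivity) h'
    rw [Real.log_one, Real.log_mul (by positivity) (by positivity), Real.log_rpow (by positivity),
      Real.log_rpow (by positivity), Real.log_mul (by positivity) (by positivity),
      Real.log_mul (by positivity) (by positivity), Real.log_pow, Real.log_pow] at h2
    rw [← hn] at h2
    have hJ : (1 - s) * m ≤ Real.log (Zfun V s).toReal := by
      have := Real.log_le_log (Real.exp_pos _) (gibbs_jensen hPL hV h1 hs)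
      rwa [Real.log_exp] at this
    have h3 : ε * (n * Real.log α + Real.log (Zfun V α).toReal) +
        (n * Real.log s + Real.log (Zfun V s).toReal) ≤ 0 := by
      have := mul_le_mul_of_nonneg_left h2 (show 0 ≤ 1 + ε by positivity)
      rw [mul_zero, mul_add, ← mul_assoc, ← mul_assoc, mul_div_cancel₀ _ (by positivity),
        mul_div_cancel₀ _ (by positivity), one_mul] at this
      exact this
    have hl : 1 - s⁻¹ ≤ Real.log s := Real.one_sub_inv_le_log_of_pos hs
    have hl2 : (n : ℝ) * (1 - s⁻¹) ≤ n * Real.log s := by gcongr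
    have h5 : 1 - s⁻¹ = - (ε * ((α - 1) / s)) := by
      rw [eq_neg_iff_add_eq_zero]; field_simp; rw [hsdef]; ring
    have h6 : 1 - s = ε * (α - 1) := by rw [hsdef]; ring
    rw [h5] at hl2
    rw [h6] at hJ
    refine le_of_mul_le_mul_left ?_ hε
    linarith
  have hlim : Filter.Tendsto (fun ε : ℝ => n * ((α - 1) / (1 - ε * (α - 1))) - (α - 1) * m)
      (nhdsWithin 0 (Set.Ioi 0)) (nhds ((α - 1) * (n - m))) := by
    have : ContinuousAt (fun ε : ℝ => n * ((α - 1) / (1 - ε * (α - 1))) - (α - 1) * m) 0 := by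
      apply ContinuousAt.sub _ continuousAt_const
      apply ContinuousAt.mul continuousAt_const
      apply ContinuousAt.div continuousAt_const (by fun_prop) (by simp)
    have h2 := this.tendsto.mono_left (nhdsWithin_le_nhds (s := Set.Ioi (0:ℝ)))
    convert h2 using 2
    simp; ring
  refine ge_of_tendsto hlim ?_
  filter_upwards [Ioc_mem_nhdsGT hε₀] with ε hε
  exact key ε hε.1 hε.2

lemma gibbs_mgf (hPL : PLprop E) {V : E → ℝ} (hV : ConvexOn ℝ Set.univ V) (h1 : Zfun V 1 = 1)
    {β : ℝ} (hβ : β ≤ 1 / 2) :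
    ∫ x, Real.exp (β * (V x - ∫ y, V y ∂(gibbs V))) ∂(gibbs V) ≤
      Real.exp (2 * Module.finrank ℝ E * β ^ 2) := by
  set n : ℕ := Module.finrank ℝ E with hn
  set m := ∫ x, V x ∂(gibbs V) with hmdef
  have hα : 0 < 1 - β := by linarith
  have h := gibbs_mgf_aux hPL hV h1 hα
  rw [← hn, ← hmdef] at h
  have zα : 0 < (Zfun V (1 - β)).toReal :=
    ENNReal.toReal_pos (Zfun_pos hV _) (Zfun_lt_top hPL hV h1 hα)
  have e : ∀ x, Real.exp (β * (V x - m)) = Real.exp (-(β * m)) * Real.exp (β * V x) := by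
    intro x; rw [← Real.exp_add]; congr 1; ring
  simp only [e]
  rw [integral_const_mul, gibbs_integral_exp hV, ← Real.exp_log zα, ← Real.exp_add]
  apply Real.exp_le_exp.2
  have hl := Real.one_sub_inv_le_log_of_pos hα
  have h2 : -(β + 2 * β ^ 2) ≤ 1 - (1 - β)⁻¹ := by
    have : 1 - (1 - β)⁻¹ + (β + 2 * β ^ 2) = β ^ 2 * (1 - 2 * β) / (1 - β) := by
      field_simp; ring
    have : 0 ≤ β ^ 2 * (1 - 2 * β) / (1 - β) := by
      apply div_nonneg (mul_nonneg (sq_nonneg _) (by linarith)) hα.le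
    linarith
  have h3 : (n : ℝ) * (-(β + 2 * β ^ 2)) ≤ n * Real.log (1 - β) := by
    gcongr; linarith
  linarith

lemma gibbs_conc (hPL : PLprop E) {V : E → ℝ} (hV : ConvexOn ℝ Set.univ V) (h1 : Zfun V 1 = 1)
    (hn : 0 < Module.finrank ℝ E) {t : ℝ} (ht : 0 ≤ t) :
    (gibbs V) {x | t < |V x - ∫ y, V y ∂(gibbs V)|} ≤
      ENNReal.ofReal (2 * Real.exp (-(1 / 8) * min t (t ^ 2 / Module.finrank ℝ E))) := by
  have := gibbs_prob h1
  have hn' : (0 : ℝ) < Module.finrank ℝ E := by exact_mod_cast hn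
  set n : ℝ := (Module.finrank ℝ E : ℝ) with hndef
  set m := ∫ x, V x ∂(gibbs V) with hmdef
  have hint : ∀ β : ℝ, β ≤ 1 / 2 → Integrable (fun x => Real.exp (β * (V x - m))) (gibbs V) := by
    intro β hβ
    have e : (fun x => Real.exp (β * (V x - m))) =
        fun x => Real.exp (-(β * m)) * Real.exp (β * V x) := by
      ext x; rw [← Real.exp_add]; congr 1; ring
    rw [e]
    exact (gibbs_int_exp hPL hV h1 (by linarith)).const_mul _
  obtain ⟨β, hβ0, hβ1, hβ⟩ : ∃ β : ℝ, 0 ≤ β ∧ β ≤ 1 / 2 ∧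
      -β * t + 2 * n * β ^ 2 ≤ -(1 / 8) * min t (t ^ 2 / n) := by
    by_cases htn : t ≤ 2 * n
    · refine ⟨t / (4 * n), by positivity, ?_, ?_⟩
      · rw [div_le_iff₀ (by positivity)]; linarith
      · have : -(t / (4 * n)) * t + 2 * n * (t / (4 * n)) ^ 2 = -(1 / 8) * (t ^ 2 / n) := by
          field_simp; ring
        rw [this]
        have := min_le_right t (t ^ 2 / n)
        linarith
    · refine ⟨1 / 2, by norm_num, le_rfl, ?_⟩
      have := min_le_left t (t ^ 2 / n)
      linarith
  have b1 := ProbabilityTheory.measure_ge_le_exp_mul_mgf (μ := gibbs V) (X := fun x => V x - m)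
    (t := β) t hβ0 (hint β hβ1)
  have b2 := ProbabilityTheory.measure_le_le_exp_mul_mgf (μ := gibbs V) (X := fun x => V x - m)
    (t := -β) (-t) (by linarith) (hint (-β) (by linarith))
  have c : ∀ γ : ℝ, γ ≤ 1 / 2 → γ ^ 2 = β ^ 2 → 
      Real.exp (-β * t) * ProbabilityTheory.mgf (fun x => V x - m) (gibbs V) γ ≤
        Real.exp (-(1 / 8) * min t (t ^ 2 / n)) := by
    intro γ hγ hγ2
    have := gibbs_mgf hPL hV h1 hγ
    rw [hγ2, ← hndef, ← hmdef] at this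
    unfold ProbabilityTheory.mgf
    calc _ ≤ Real.exp (-β * t) * Real.exp (2 * n * β ^ 2) := by gcongr
      _ = Real.exp (-β * t + 2 * n * β ^ 2) := by rw [Real.exp_add]
      _ ≤ _ := Real.exp_le_exp.2 hβ
  have c1 := c β hβ1 rfl
  have c2 := c (-β) (by linarith) (by ring)
  have e2 : - -β * -t = -β * t := by ring
  rw [e2] at b2
  have hsub : {x | t < |V x - m|} ⊆ {x | t ≤ V x - m} ∪ {x | V x - m ≤ -t} := by
    intro x hx
    have hx : t < |V x - m| := hx
    rcases lt_abs.1 hx with h | h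
    · left; exact h.le
    · right; show V x - m ≤ -t; linarith
  have h3 : (gibbs V).real {x | t < |V x - m|} ≤
      2 * Real.exp (-(1 / 8) * min t (t ^ 2 / n)) := by
    have := measureReal_mono (μ := gibbs V) hsub
    have := measureReal_union_le (μ := gibbs V) {x | t ≤ V x - m} {x | V x - m ≤ -t}
    linarith
  rw [← ENNReal.ofReal_toReal (measure_ne_top (gibbs V) _)]
  exact ENNReal.ofReal_le_ofReal h3

end conc

section marg
set_option linter.unusedSectionVars false
variable {E : Type*} [NormedAddCommGroup E] [NormedSpace ℝ E] [FiniteDimensional ℝ E]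
  [MeasureSpace E] [BorelSpace E] [(volume : Measure E).IsAddHaarMeasure]

instance instHaarVolumeProd : (volume : Measure (E × E)).IsAddHaarMeasure :=
  inferInstanceAs ((volume : Measure E).prod (volume : Measure E)).IsAddHaarMeasure

lemma marg (hPL : PLprop E) {W : E × E → ℝ} (hW : ConvexOn ℝ Set.univ W) (h1 : Zfun W 1 = 1)
    {f : E → ℝ} (hf : ∀ x, f x = ∫ y, Real.exp (-W (x, y))) :
    (∀ x, 0 < f x) ∧ ConvexOn ℝ Set.univ (fun x => -Real.log (f x)) ∧
      (gibbs W).map Prod.fst = gibbs (fun x => -Real.log (f x)) := by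
  have hm := convex_measurable hW
  have hmd : Measurable fun p : E × E => ENNReal.ofReal (Real.exp (-W p)) := by fun_prop
  set L : E → ENNReal := fun x => ∫⁻ y, ENNReal.ofReal (Real.exp (-W (x, y))) with hL
  have hLm : Measurable L := hmd.lintegral_prod_right'
  have hpl : ∀ a b : ℝ, 0 < a → 0 < b → a + b = 1 → ∀ x x', L x ^ a * L x' ^ b ≤ L (a • x + b • x') := by
    intro a b ha hb hab x x'
    refine hPL a b ha hb hab _ _ _ (hmd.comp measurable_prodMk_left)
      (hmd.comp measurable_prodMk_left) (hmd.comp measurable_prodMk_left) ?_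
    intro y y'
    rw [ofReal_exp_rpow, ofReal_exp_rpow, ← ENNReal.ofReal_mul (Real.exp_pos _).le,
      ← Real.exp_add]
    apply ENNReal.ofReal_le_ofReal
    apply Real.exp_le_exp.2
    have := hW.2 (Set.mem_univ (x, y)) (Set.mem_univ (x', y')) ha.le hb.le hab
    simp only [Prod.smul_mk, Prod.mk_add_mk, smul_eq_mul] at this
    linarith
  have hL0 : ∀ x, L x ≠ 0 := by
    intro x
    intro h
    have h := (lintegral_eq_zero_iff (hmd.comp measurable_prodMk_left)).1 h
    have h2 : ∀ᵐ y : E, False := by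
      filter_upwards [h] with y hy
      simp only [Function.comp, Pi.zero_apply, ENNReal.ofReal_eq_zero] at hy
      exact absurd hy (not_le.2 (Real.exp_pos _))
    rw [Filter.eventually_false_iff_eq_bot, ae_eq_bot] at h2
    exact NeZero.ne (volume : Measure E) h2
  have hint : ∫⁻ x, L x = 1 := by
    rw [← h1, Zfun, Measure.volume_eq_prod]
    simp only [one_mul]
    rw [lintegral_prod _ hmd.aemeasurable]
  have hLt : ∀ x, L x ≠ ⊤ := by
    intro x hx
    have hall : ∀ z, L z = ⊤ := by
      intro z
      have := hpl (1/2) (1/2) (by norm_num) (by norm_num) (by norm_num) x ((2:ℝ) • z - x)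
      have e : (1/2 : ℝ) • x + (1/2 : ℝ) • ((2:ℝ) • z - x) = z := by module
      rw [e, hx, ENNReal.top_rpow_of_pos (by norm_num), ENNReal.top_mul] at this
      · exact top_le_iff.1 this
      · rw [Ne, ENNReal.rpow_eq_zero_iff_of_pos (by norm_num)]
        exact hL0 _
    have h2 := ae_lt_top hLm (by rw [hint]; simp)
    have h3 : ∀ᵐ y : E, False := by
      filter_upwards [h2] with y hy
      rw [hall] at hy; exact lt_irrefl _ hy
    rw [Filter.eventually_false_iff_eq_bot, ae_eq_bot] at h3
    exact NeZero.ne (volume : Measure E) h3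
  have hfL : ∀ x, f x = (L x).toReal := by
    intro x
    rw [hf, integral_eq_lintegral_of_nonneg_ae (ae_of_all _ fun x => (Real.exp_pos _).le)]
    exact (Measurable.aestronglyMeasurable (by fun_prop))
  have hpos : ∀ x, 0 < f x := fun x => hfL x ▸ ENNReal.toReal_pos (hL0 x) (hLt x)
  refine ⟨hpos, ?_, ?_⟩
  · rw [convexOn_iff_forall_pos]
    refine ⟨convex_univ, ?_⟩
    intro x _ x' _ a b ha hb hab
    have h := ENNReal.toReal_mono (hLt _) (hpl a b ha hb hab x x')
    rw [ENNReal.toReal_mul, ← ENNReal.toReal_rpow, ← ENNReal.toReal_rpow, ← hfL, ← hfL, ← hfL] at h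
    have p1 := hpos x
    have p2 := hpos x'
    have h2 := Real.log_le_log (by positivity) h
    rw [Real.log_mul (by positivity) (by positivity), Real.log_rpow p1, Real.log_rpow p2] at h2
    simp only [smul_eq_mul]
    linarith
  · ext S hS
    rw [Measure.map_apply measurable_fst hS, gibbs, gibbs,
      withDensity_apply _ (measurable_fst hS), withDensity_apply _ hS]
    have e : ∀ x, ENNReal.ofReal (Real.exp (-(-Real.log (f x)))) = L x := by
      intro x
      rw [neg_neg, Real.exp_log (hpos x), hfL, ENNReal.ofReal_toReal (hLt x)]
    simp only [e]
    have e2 : (Prod.fst ⁻¹' S : Set (E × E)) = S ×ˢ Set.univ := by ext; simp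
    rw [e2, Measure.volume_eq_prod, setLIntegral_prod _ hmd.aemeasurable]
    simp [hL]

lemma gibbs_swap {W : E × E → ℝ} (hW : ConvexOn ℝ Set.univ W) :
    ConvexOn ℝ Set.univ (W ∘ Prod.swap) ∧ (gibbs W).map Prod.swap = gibbs (W ∘ Prod.swap) := by
  have hm := convex_measurable hW
  constructor
  · refine ⟨convex_univ, ?_⟩
    intro x _ y _ a b ha hb hab
    exact hW.2 (Set.mem_univ x.swap) (Set.mem_univ y.swap) ha hb hab
  · ext S hS
    have hmp : MeasurePreserving (Prod.swap : E × E → E × E) volume volume :=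
      Measure.measurePreserving_swap
    rw [Measure.map_apply measurable_swap hS, gibbs, gibbs,
      withDensity_apply _ (measurable_swap hS), withDensity_apply _ hS,
      ← hmp.setLIntegral_comp_preimage hS (by fun_prop)]
    simp

lemma Zfun_one_eq {W : E → ℝ} : Zfun W 1 = gibbs W Set.univ := by
  rw [gibbs, withDensity_apply _ MeasurableSet.univ]
  simp [Zfun]

lemma marg_conc (hPL : PLprop E) (hn : 0 < Module.finrank ℝ E)
    {W : E × E → ℝ} (hW : ConvexOn ℝ Set.univ W) (h1 : Zfun W 1 = 1)
    {f : E → ℝ} (hf : ∀ x, f x = ∫ y, Real.exp (-W (x, y))) :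
    (∀ x, 0 < f x) ∧ Integrable (fun p : E × E => -Real.log (f p.1)) (gibbs W) ∧
    ∀ t : ℝ, 0 ≤ t →
    (gibbs W) {p | t < |-Real.log (f p.1) - ∫ q, -Real.log (f q.1) ∂(gibbs W)|} ≤
      ENNReal.ofReal (2 * Real.exp (-(1 / 8) * min t (t ^ 2 / Module.finrank ℝ E))) := by
  obtain ⟨hpos, hc, hmap⟩ := marg hPL hW h1 hf
  have hvm := convex_measurable hc
  have hz : Zfun (fun x => -Real.log (f x)) 1 = 1 := by
    rw [Zfun_one_eq, ← hmap, Measure.map_apply measurable_fst MeasurableSet.univ, Set.preimage_univ,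
      ← Zfun_one_eq, h1]
  have hi := gibbs_int hPL hc hz
  refine ⟨hpos, ?_, ?_⟩
  · rw [← hmap] at hi
    exact (integrable_map_measure hvm.aestronglyMeasurable measurable_fst.aemeasurable).1 hi
  · intro t ht
    have h := gibbs_conc hPL hc hz hn ht
    have e : ∫ q, -Real.log (f q.1) ∂(gibbs W) =
        ∫ x, -Real.log (f x) ∂(gibbs fun x => -Real.log (f x)) := by
      rw [← hmap, integral_map measurable_fst.aemeasurable hvm.aestronglyMeasurable]
    rw [e]
    set m := ∫ x, -Real.log (f x) ∂(gibbs fun x => -Real.log (f x))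
    refine le_trans (le_of_eq ?_) h
    rw [← hmap, Measure.map_apply measurable_fst]
    · rfl
    · exact measurableSet_lt measurable_const (by fun_prop)

end marg

/-- There are universal constants `c₁, c₂ > 0` such that for every dimension
`d`, every log-concave joint density `f(x,y) = e^{-W(x,y)}` on `ℝ^d × ℝ^d` (with `W` convex and
`∫ e^{-W} = 1`), the information density `-log (f(X,Y) / (f(X) f(Y)))` concentrates around the
mutual information: `P(|-log (f(X,Y)/(f(X)f(Y))) - I(X;Y)| > t) ≤
3 c₁ exp(-(c₂/3) min(t, t²/d))` for all `t ≥ 0`. -/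
theorem information_density_concentration :
    ∃ c₁ c₂ : ℝ, 0 < c₁ ∧ 0 < c₂ ∧
      ∀ (d : ℕ), 0 < d →
      ∀ (W : EuclideanSpace ℝ (Fin d) × EuclideanSpace ℝ (Fin d) → ℝ),
        ConvexOn ℝ Set.univ W →
        (∫ p, Real.exp (-W p)) = 1 →
      ∀ (μ : Measure (EuclideanSpace ℝ (Fin d) × EuclideanSpace ℝ (Fin d))),
        μ = volume.withDensity (fun p => ENNReal.ofReal (Real.exp (-W p))) →
      ∀ (fX fY : EuclideanSpace ℝ (Fin d) → ℝ),
        (∀ x, fX x = ∫ y, Real.exp (-W (x, y))) →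
        (∀ y, fY y = ∫ x, Real.exp (-W (x, y))) →
      ∀ (ic : EuclideanSpace ℝ (Fin d) × EuclideanSpace ℝ (Fin d) → ℝ),
        (∀ p, ic p = -Real.log (Real.exp (-W p) / (fX p.1 * fY p.2))) →
      ∀ t : ℝ, 0 ≤ t →
        μ {p | t < |ic p - ∫ q, ic q ∂μ|}
          ≤ ENNReal.ofReal (3 * c₁ * Real.exp (-(c₂ / 3) * min t (t ^ 2 / d))) := by
  refine ⟨2, 1 / 48, by norm_num, by norm_num, ?_⟩
  intro d hd W hW hWi μ hμ fX fY hfX hfY ic hic t ht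
  have hPL := PL_euc d
  have hPL2 := PL_prod hPL hPL
  have hd' : (0 : ℝ) < d := by exact_mod_cast hd
  have hn : Module.finrank ℝ (EuclideanSpace ℝ (Fin d)) = d := by simp
  have hn2 : Module.finrank ℝ (EuclideanSpace ℝ (Fin d) × EuclideanSpace ℝ (Fin d)) = d + d := by
    simp
  have h1 : Zfun W 1 = 1 := by
    have hint : Integrable fun p => Real.exp (-W p) := by
      by_contra hcon
      rw [integral_undef hcon] at hWi
      exact zero_ne_one hWi
    rw [Zfun]
    simp only [one_mul]
    rw [← ofReal_integral_eq_lintegral_ofReal hint (ae_of_all _ fun _ => (Real.exp_pos _).le), hWi]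
    simp
  have hμ' : μ = gibbs W := hμ
  rw [hμ']
  have hprob := gibbs_prob h1
  obtain ⟨hsc, hsm⟩ := gibbs_swap hW
  have h1s : Zfun (W ∘ Prod.swap) 1 = 1 := by
    rw [Zfun_one_eq, ← hsm, Measure.map_apply measurable_swap MeasurableSet.univ, Set.preimage_univ,
      ← Zfun_one_eq, h1]
  have iW := gibbs_int hPL2 hW h1
  have cW := gibbs_conc hPL2 hW h1 (by rw [hn2]; omega) (t := t / 3) (by positivity)
  obtain ⟨pX, iX, cX⟩ := marg_conc hPL (by rw [hn]; exact hd) hW h1 hfX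
  obtain ⟨pY, iY', cY'⟩ := marg_conc hPL (by rw [hn]; exact hd) hsc h1s (f := fY) hfY
  have cX := cX (t / 3) (by positivity)
  have cY' := cY' (t / 3) (by positivity)
  have hmY : Measurable fun y => -Real.log (fY y) := convex_measurable (marg hPL hsc h1s hfY).2.1
  have hmY1 : Measurable fun p : EuclideanSpace ℝ (Fin d) × EuclideanSpace ℝ (Fin d) =>
    -Real.log (fY p.1) := hmY.comp measurable_fst
  rw [← hsm] at iY' cY'
  have iY : Integrable (fun p : EuclideanSpace ℝ (Fin d) × EuclideanSpace ℝ (Fin d) =>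
      -Real.log (fY p.2)) (gibbs W) :=
    (integrable_map_measure hmY1.aestronglyMeasurable measurable_swap.aemeasurable).1 iY'
  rw [integral_map measurable_swap.aemeasurable hmY1.aestronglyMeasurable,
    Measure.map_apply measurable_swap
      (measurableSet_lt measurable_const (by fun_prop))] at cY'
  simp only [Prod.fst_swap, Set.preimage_ofPred_eq] at cY'
  have hic' : ic = fun p => W p - (-Real.log (fX p.1)) - (-Real.log (fY p.2)) := by
    ext p
    have p1 := pX p.1
    have p2 := pY p.2
    rw [hic, Real.log_div (Real.exp_pos _).ne' (by positivity), Real.log_exp,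
      Real.log_mul p1.ne' p2.ne']
    ring
  have hE : ∫ q, ic q ∂(gibbs W) = (∫ q, W q ∂(gibbs W)) - (∫ q, -Real.log (fX q.1) ∂(gibbs W)) -
      (∫ q, -Real.log (fY q.2) ∂(gibbs W)) := by
    rw [hic']
    exact (integral_sub (iW.sub iX) iY).trans (congrArg (fun z => z - _) (integral_sub iW iX))
  rw [hE, hic']
  set mW := ∫ q, W q ∂(gibbs W)
  set mX := ∫ q, -Real.log (fX q.1) ∂(gibbs W)
  set mY := ∫ q, -Real.log (fY q.2) ∂(gibbs W)
  set B := Real.exp (-((1 / 48 : ℝ) / 3) * min t (t ^ 2 / d)) with hB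
  have hbound : ∀ k : ℝ, 0 < k → k ≤ 2 * d →
      Real.exp (-(1 / 8) * min (t / 3) ((t / 3) ^ 2 / k)) ≤ B := by
    intro k hk hk2
    apply Real.exp_le_exp.2
    have : (1 / 18) * min t (t ^ 2 / d) ≤ min (t / 3) ((t / 3) ^ 2 / k) := by
      apply le_min
      · have := min_le_left t (t ^ 2 / d)
        linarith
      · have h2 := min_le_right t (t ^ 2 / d)
        calc (1 / 18) * min t (t ^ 2 / d) ≤ (1 / 18) * (t ^ 2 / d) := by linarith
          _ = (t / 3) ^ 2 / (2 * d) := by field_simp; ring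
          _ ≤ _ := by gcongr
    linarith
  have hbE : ∀ k : ℝ, 0 < k → k ≤ 2 * d →
      ENNReal.ofReal (2 * Real.exp (-(1 / 8) * min (t / 3) ((t / 3) ^ 2 / k))) ≤
        ENNReal.ofReal (2 * B) := by
    intro k hk hk2
    apply ENNReal.ofReal_le_ofReal
    have := hbound k hk hk2
    linarith
  rw [hn2] at cW
  rw [hn] at cX cY'
  have cW := cW.trans (hbE _ (by push_cast; linarith) (by push_cast; linarith))
  have cX := cX.trans (hbE _ hd' (by linarith))
  have cY := cY'.trans (hbE _ hd' (by linarith))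
  have hsub : {p | t < |W p - (-Real.log (fX p.1)) - (-Real.log (fY p.2)) - (mW - mX - mY)|} ⊆
      ({p | t / 3 < |W p - mW|} ∪ {p | t / 3 < |-Real.log (fX p.1) - mX|}) ∪
        {p | t / 3 < |-Real.log (fY p.2) - mY|} := by
    intro p hp
    by_contra hcon
    simp only [Set.mem_union, Set.mem_ofPred_eq, not_or, not_lt] at hcon hp
    obtain ⟨⟨a1, a2⟩, a3⟩ := hcon
    rw [abs_le] at a1 a2 a3
    rcases lt_abs.1 hp with h | h <;> linarith
  have hBp : 0 < B := Real.exp_pos _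
  calc _ ≤ _ := measure_mono hsub
    _ ≤ _ := measure_union_le _ _
    _ ≤ _ := add_le_add (measure_union_le _ _) le_rfl
    _ ≤ ENNReal.ofReal (2 * B) + ENNReal.ofReal (2 * B) + ENNReal.ofReal (2 * B) := by gcongr
    _ = ENNReal.ofReal (3 * 2 * B) := by
      rw [← ENNReal.ofReal_add (by positivity) (by positivity),
        ← ENNReal.ofReal_add (by positivity) (by positivity)]
      congr 1; ring
end
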